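/- arXiv:2603.12954 — 5 statements merged into one kernel-verified Lean document; each statement's English description precedes it below -/
import Mathlib

section
/- Let X be a metric space, μ an Ahlfors s-regular Borel measure on X for some s ∈ (0,∞), (Y,ρ) a metric space, 0 < r < 1 and 0 < q < ∞ with rq ≤ s, and let u ∈ W^{r,q}_{loc}(X,μ;Y). Define D := { x ∈ X : limsup_{ε→0⁺} ⨍_{B_ε(x)} ⨍_{B_ε(x)} ρ(u(z),u(y))^q dμ(z) dμ(y) > 0 }. Then H^{s−rq}(D) = 0; in other words, H^{s−rq}-almost every point of X is an average Lebesgue point of u. -/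
open MeasureTheory Metric Filter Set
open scoped ENNReal Topology

/-- A Borel measure `μ` on a metric space is Ahlfors `s`-regular. -/
def IsAhlfors {X : Type*} [MetricSpace X] [MeasurableSpace X]
    (μ : Measure X) (s : ℝ) : Prop :=
  ∃ c C : ℝ, 0 < c ∧ 0 < C ∧ ∀ (x : X) (ρ : ℝ), 0 < ρ →
    ENNReal.ofReal ρ < EMetric.diam (Set.univ : Set X) →
    ENNReal.ofReal (c * ρ ^ s) ≤ μ (closedBall x ρ) ∧
      μ (closedBall x ρ) ≤ ENNReal.ofReal (C * ρ ^ s)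

/-- `u ∈ W^{r,q}_loc(X,μ;Y)`: `u` is measurable, `F_u(x,z) = ρ(u x, u z)` is locally
`q`-integrable on `X × X`, and the fractional Sobolev energy is finite on every ball. -/
def MemFracSobolevLoc {X Y : Type*} [MetricSpace X] [MeasurableSpace X] [MetricSpace Y]
    [MeasurableSpace Y] [BorelSpace Y]
    (μ : Measure X) (r q s : ℝ) (u : X → Y) : Prop :=
  Measurable u ∧
  (∀ (x : X) (R : ℝ), 0 < R →
    ∫⁻ z in closedBall x R, ∫⁻ y in closedBall x R, edist (u z) (u y) ^ q ∂μ ∂μ < ⊤) ∧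
  (∀ (x : X) (R : ℝ), 0 < R →
    ∫⁻ z in closedBall x R, ∫⁻ y in closedBall x R,
      edist (u z) (u y) ^ q / edist z y ^ (r * q + s) ∂μ ∂μ < ⊤)

/-- The double average `⨍_{B_ε(x)} ⨍_{B_ε(x)} W(z,y) dμ(z) dμ(y)`. -/
noncomputable def doubleAvg {X : Type*} [MetricSpace X] [MeasurableSpace X]
    (μ : Measure X) (W : X → X → ℝ≥0∞) (x : X) (ε : ℝ) : ℝ≥0∞ :=
  (μ (closedBall x ε))⁻¹ * (μ (closedBall x ε))⁻¹ *
    ∫⁻ z in closedBall x ε, ∫⁻ y in closedBall x ε, W z y ∂μ ∂μ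

/-!
The energy density `W z y / edist z y ^ (p + s)` is integrable on bounded sets, so the energy
carried by the strip `edist z y ≤ δ` around the diagonal tends to `0` with `δ`. For `ε ≤ δ / 2` the
double average over `closedBall x ε` is at most a constant times `ε ^ (p - s)` times the energy of
that strip above the ball. Hence each point where the averages do not tend to `0` is the centre of
arbitrarily small balls with `ε ^ (s - p) ≲ ν (closedBall x ε)`, for measures `ν` of arbitrarily
small total mass, and the Vitali covering theorem turns this into `μH[s - p] = 0`.

Since `X` need not be separable, the inner integrals are not known to be measurable functions of the
outer variable, so all integrals are lower integrals and dominated convergence is needed for these.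
-/

/-- Positive lower `s`-density of `μ` at `x`, i.e. `liminf μ (closedBall x ε) / ε ^ s > 0` as
`ε → 0⁺`, written without division. It is the form of Ahlfors regularity that controls averages. -/
def HasPosLowerDensity {X : Type*} [PseudoMetricSpace X] [MeasurableSpace X]
    (μ : Measure X) (s : ℝ) (x : X) : Prop :=
  ∃ c : ℝ≥0∞, c ≠ 0 ∧ ∀ᶠ ε in 𝓝[>] (0 : ℝ), c * ENNReal.ofReal ε ^ s ≤ μ (closedBall x ε)

theorem IsAhlfors.hasPosLowerDensity {X : Type*} [MetricSpace X] [MeasurableSpace X]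
    {μ : Measure X} {s : ℝ} (hμ : IsAhlfors μ s) (x : X) [hx : (𝓝[≠] x).NeBot] :
    HasPosLowerDensity μ s x := by
  obtain ⟨c, _, hc, _, hreg⟩ := hμ
  obtain ⟨y, hy⟩ := hx.nonempty_of_mem self_mem_nhdsWithin
  have hdiam : 0 < ediam (univ : Set X) :=
    (edist_pos.2 hy).trans_le (edist_le_ediam_of_mem (mem_univ y) (mem_univ x))
  have hsmall : ∀ᶠ ε in 𝓝[>] (0 : ℝ), ENNReal.ofReal ε < ediam (univ : Set X) :=
    (ENNReal.continuous_ofReal.tendsto' 0 0 ENNReal.ofReal_zero).mono_left nhdsWithin_le_nhds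
      |>.eventually_lt_const hdiam
  refine ⟨ENNReal.ofReal c, (ENNReal.ofReal_pos.2 hc).ne', ?_⟩
  filter_upwards [hsmall, self_mem_nhdsWithin] with ε hε hε0
  rw [ENNReal.ofReal_rpow_of_pos hε0, ← ENNReal.ofReal_mul hc.le]
  exact (hreg x ε hε0 hε).1

theorem tendsto_lintegral_zero_of_dominated {α : Type*} [MeasurableSpace α] {μ : Measure α}
    {f : ℕ → α → ℝ≥0∞} {g : α → ℝ≥0∞}
    (hfg : ∀ n z, f n z ≤ g z) (hg : ∫⁻ z, g z ∂μ ≠ ⊤)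
    (hf : ∀ z, g z ≠ ⊤ → Tendsto (fun n => f n z) atTop (𝓝 0)) :
    Tendsto (fun n => ∫⁻ z, f n z ∂μ) atTop (𝓝 0) := by
  choose h hmeas hle heq using fun n => exists_measurable_le_lintegral_eq (μ := μ) (f n)
  have hhg : ∀ z, ⨆ n, h n z ≤ g z := fun z => iSup_le fun n => (hle n z).trans (hfg n z)
  have hFatou : limsup (fun n => ∫⁻ z, h n z ∂μ) atTop ≤ ∫⁻ z, limsup (fun n => h n z) atTop ∂μ :=
    limsup_lintegral_le (fun z => ⨆ n, h n z) hmeas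
      (fun n => .of_forall fun z => le_iSup (fun n => h n z) n)
      (ne_top_of_le_ne_top hg (lintegral_mono hhg))
  -- `{g = ⊤}` may fail to be null for a non-measurable `g`, so finiteness is used through `⊤ * _`.
  have htop : ∀ z, ⊤ * limsup (fun n => h n z) atTop ≤ g z := fun z => by
    by_cases hz : g z = ⊤
    · exact le_top.trans_eq hz.symm
    · have hlim : Tendsto (fun n => h n z) atTop (𝓝 0) :=
        tendsto_of_tendsto_of_tendsto_of_le_of_le tendsto_const_nhds (hf z hz)
          (fun _ => zero_le) fun n => hle n z
      rw [hlim.limsup_eq, mul_zero]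
      exact zero_le
  have hzero : ∫⁻ z, limsup (fun n => h n z) atTop ∂μ = 0 := by
    by_contra hne
    refine hg (top_unique ?_)
    rw [← ENNReal.top_mul hne, ← lintegral_const_mul _ (.limsup hmeas)]
    exact lintegral_mono htop
  simp_rw [heq]
  exact tendsto_of_le_liminf_of_limsup_le zero_le (hFatou.trans hzero.le)

theorem setLIntegral_closedBall_tendsto_zero {X : Type*} [MetricSpace X] [MeasurableSpace X]
    [OpensMeasurableSpace X] {μ : Measure X} {f : X → ℝ≥0∞} {z : X} (hz : f z = 0)
    (hf : ∫⁻ y, f y ∂μ ≠ ⊤) :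
    Tendsto (fun δ => ∫⁻ y in closedBall z δ, f y ∂μ) (𝓝[>] 0) (𝓝 0) := by
  have hball (δ : ℝ) : μ.withDensity f (closedBall z δ) = ∫⁻ y in closedBall z δ, f y ∂μ :=
    withDensity_apply _ measurableSet_closedBall
  have hcenter : μ.withDensity f (⋂ δ > 0, closedBall z δ) = 0 := by
    rw [biInter_gt_closedBall, closedBall_zero, withDensity_apply _ (measurableSet_singleton z),
      lintegral_singleton, hz, zero_mul]
  have hlim := tendsto_measure_biInter_gt (μ := μ.withDensity f) (s := closedBall z) (a := 0)
    (fun _ _ => measurableSet_closedBall.nullMeasurableSet)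
    (fun _ _ _ => closedBall_subset_closedBall)
    ⟨1, one_pos, ne_top_of_le_ne_top hf ((hball 1).trans_le (setLIntegral_le_lintegral _ _))⟩
  rw [hcenter] at hlim
  exact hlim.congr hball

section NearDiagonal

variable {X : Type*} [MeasurableSpace X]

/-- The measure `A ↦ ∫⁻ z in A, ∫⁻ y in closedBall z δ, K z y`: the part of the energy `∬ K` that
comes from pairs of points at distance at most `δ`, distributed over the first point. -/
noncomputable def nearDiagonalMeasure [PseudoMetricSpace X] (μ : Measure X) (K : X → X → ℝ≥0∞)
    (δ : ℝ) : Measure X :=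
  μ.withDensity fun z => ∫⁻ y in closedBall z δ, K z y ∂μ

theorem nearDiagonalMeasure_univ [PseudoMetricSpace X] (μ : Measure X) (K : X → X → ℝ≥0∞) (δ : ℝ) :
    nearDiagonalMeasure μ K δ univ = ∫⁻ z, ∫⁻ y in closedBall z δ, K z y ∂μ ∂μ := by
  rw [nearDiagonalMeasure, withDensity_apply _ .univ, Measure.restrict_univ]

theorem isFiniteMeasure_nearDiagonalMeasure [PseudoMetricSpace X] {μ : Measure X}
    {K : X → X → ℝ≥0∞} (hK : ∫⁻ z, ∫⁻ y, K z y ∂μ ∂μ < ⊤) (δ : ℝ) :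
    IsFiniteMeasure (nearDiagonalMeasure μ K δ) := by
  refine ⟨lt_of_le_of_lt ?_ hK⟩
  rw [nearDiagonalMeasure_univ]
  exact lintegral_mono fun z => setLIntegral_le_lintegral _ _

theorem nearDiagonalMeasure_univ_tendsto_zero [MetricSpace X] [OpensMeasurableSpace X]
    {μ : Measure X} {K : X → X → ℝ≥0∞} (hdiag : ∀ z, K z z = 0)
    (hK : ∫⁻ z, ∫⁻ y, K z y ∂μ ∂μ < ⊤) :
    Tendsto (fun δ => nearDiagonalMeasure μ K δ univ) (𝓝[>] 0) (𝓝 0) := by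
  simp_rw [nearDiagonalMeasure_univ]
  refine tendsto_of_seq_tendsto fun δ hδ => ?_
  exact tendsto_lintegral_zero_of_dominated (fun n z => setLIntegral_le_lintegral _ _) hK.ne
    fun z hz => (setLIntegral_closedBall_tendsto_zero (hdiag z) hz).comp hδ

theorem setLIntegral_closedBall_le_nearDiagonalMeasure [PseudoMetricSpace X]
    [OpensMeasurableSpace X] (μ : Measure X) (K : X → X → ℝ≥0∞) {E : Set X} {x : X} {ε δ : ℝ}
    (hE : closedBall x ε ⊆ E) (hδ : 2 * ε ≤ δ) :
    ∫⁻ z in closedBall x ε, ∫⁻ y in closedBall x ε, K z y ∂μ ∂μ ≤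
      nearDiagonalMeasure (μ.restrict E) K δ (closedBall x ε) := by
  rw [nearDiagonalMeasure, withDensity_apply _ measurableSet_closedBall,
    Measure.restrict_restrict_of_subset hE]
  refine setLIntegral_mono' measurableSet_closedBall fun z hz => ?_
  rw [Measure.restrict_restrict measurableSet_closedBall]
  refine lintegral_mono_set (subset_inter (closedBall_subset_closedBall' ?_) hE)
  rw [dist_comm]
  linarith [mem_closedBall.1 hz]

end NearDiagonal

theorem ediam_closedBall_le {X : Type*} [PseudoMetricSpace X] (x : X) {ε : ℝ}
    (hε : 0 ≤ ε) : ediam (closedBall x ε) ≤ 2 * ENNReal.ofReal ε := by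
  rw [← closedEBall_ofReal hε]
  exact ediam_closedEBall_le

section DoubleAverage

variable {X : Type*} [MetricSpace X] [MeasurableSpace X]

theorem setLIntegral_le_ediam_rpow_mul (μ : Measure X) {a : ℝ} (ha : 0 ≤ a) {W : X → X → ℝ≥0∞}
    (hW : ∀ z, W z z = 0) {A : Set X} (hA : MeasurableSet A) (hdiam : ediam A ≠ ⊤) :
    ∫⁻ z in A, ∫⁻ y in A, W z y ∂μ ∂μ ≤
      ediam A ^ a * ∫⁻ z in A, ∫⁻ y in A, W z y / edist z y ^ a ∂μ ∂μ := by
  have hfin : ediam A ^ a ≠ ⊤ := ENNReal.rpow_ne_top_of_nonneg ha hdiam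
  have hpt : ∀ z ∈ A, ∀ y ∈ A, W z y ≤ ediam A ^ a * (W z y / edist z y ^ a) := by
    intro z hz y hy
    rcases eq_or_ne z y with rfl | hzy
    · simp only [hW, zero_le]
    have hpos : edist z y ^ a ≠ 0 :=
      (ENNReal.rpow_pos (edist_pos.2 hzy) (edist_ne_top z y)).ne'
    have htop : edist z y ^ a ≠ ⊤ := ENNReal.rpow_ne_top_of_nonneg ha (edist_ne_top z y)
    calc W z y = edist z y ^ a * (W z y / edist z y ^ a) := (ENNReal.mul_div_cancel hpos htop).symm
      _ ≤ ediam A ^ a * (W z y / edist z y ^ a) := by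
          gcongr
          exact edist_le_ediam_of_mem hz hy
  rw [← lintegral_const_mul' _ _ hfin]
  refine setLIntegral_mono' hA fun z hz => ?_
  rw [← lintegral_const_mul' _ _ hfin]
  exact setLIntegral_mono' hA (hpt z hz)

theorem rpow_mul_doubleAvg_le [OpensMeasurableSpace X] (μ : Measure X) {s p : ℝ} (hp : 0 ≤ p + s)
    {W : X → X → ℝ≥0∞} (hW : ∀ z, W z z = 0) {x : X} {ε : ℝ} (hε : 0 < ε) {c : ℝ≥0∞}
    (hc : c * ENNReal.ofReal ε ^ s ≤ μ (closedBall x ε)) :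
    ENNReal.ofReal ε ^ (s - p) * doubleAvg μ W x ε ≤ c⁻¹ ^ 2 * 2 ^ (p + s) *
      ∫⁻ z in closedBall x ε, ∫⁻ y in closedBall x ε, W z y / edist z y ^ (p + s) ∂μ ∂μ := by
  set e := ENNReal.ofReal ε
  set I := ∫⁻ z in closedBall x ε, ∫⁻ y in closedBall x ε, W z y / edist z y ^ (p + s) ∂μ ∂μ
  have he0 : e ≠ 0 := (ENNReal.ofReal_pos.2 hε).ne'
  have he : e ≠ ⊤ := ENNReal.ofReal_ne_top
  have hmass : (μ (closedBall x ε))⁻¹ ≤ c⁻¹ * e ^ (-s) := by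
    rw [ENNReal.rpow_neg, ← ENNReal.mul_inv (.inr (by finiteness))
      (.inr (ENNReal.rpow_pos he0.bot_lt he).ne')]
    exact ENNReal.inv_le_inv.2 hc
  have hdiam := ediam_closedBall_le x hε.le
  have hint : ∫⁻ z in closedBall x ε, ∫⁻ y in closedBall x ε, W z y ∂μ ∂μ ≤
      (2 * e) ^ (p + s) * I :=
    (setLIntegral_le_ediam_rpow_mul μ hp hW measurableSet_closedBall
      (ne_top_of_le_ne_top (by finiteness) hdiam)).trans (by gcongr)
  have hcancel : e ^ (s - p) * (e ^ (-s) * e ^ (-s) * e ^ (p + s)) = 1 := by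
    simp only [← ENNReal.rpow_add _ _ he0 he]
    ring_nf
    exact ENNReal.rpow_zero
  calc e ^ (s - p) * doubleAvg μ W x ε
      ≤ e ^ (s - p) * (c⁻¹ * e ^ (-s) * (c⁻¹ * e ^ (-s)) * ((2 * e) ^ (p + s) * I)) := by
        unfold doubleAvg
        gcongr
    _ = c⁻¹ ^ 2 * 2 ^ (p + s) * I * (e ^ (s - p) * (e ^ (-s) * e ^ (-s) * e ^ (p + s))) := by
        rw [ENNReal.mul_rpow_of_nonneg _ _ hp]
        ring
    _ = c⁻¹ ^ 2 * 2 ^ (p + s) * I := by rw [hcancel, mul_one]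

theorem limsup_doubleAvg_eq_zero_of_isOpen_singleton [OpensMeasurableSpace X] (μ : Measure X)
    {W : X → X → ℝ≥0∞} {x : X} (hW : W x x = 0) (hx : IsOpen {x}) :
    limsup (doubleAvg μ W x) (𝓝[>] 0) = 0 := by
  have hball : ∀ᶠ ε in 𝓝[>] (0 : ℝ), closedBall x ε ⊆ {x} :=
    (eventually_closedBall_subset (hx.mem_nhds rfl)).filter_mono nhdsWithin_le_nhds
  have hzero : ∀ᶠ ε in 𝓝[>] (0 : ℝ), doubleAvg μ W x ε = 0 := by
    filter_upwards [hball] with ε hε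
    rw [doubleAvg, setLIntegral_eq_zero measurableSet_closedBall, mul_zero]
    refine fun z hz => setLIntegral_eq_zero measurableSet_closedBall fun y hy => ?_
    rw [hε hz, hε hy, hW, Pi.zero_apply]
  rw [limsup_congr hzero, limsup_const]

end DoubleAverage

section Covering

variable {X : Type*} [MetricSpace X] [MeasurableSpace X]

theorem exists_countable_cover_tsum_ediam_rpow_le [OpensMeasurableSpace X] {d : ℝ} (hd : 0 ≤ d)
    (ν : Measure X) [IsFiniteMeasure ν] {S : Set X} {M : ℝ≥0∞} {R : ℝ}
    (h : ∀ x ∈ S, ∃ ε, 0 < ε ∧ ε ≤ R ∧ ENNReal.ofReal ε ^ d ≤ M * ν (closedBall x ε)) :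
    ∃ (U : Set X) (t : U → Set X), U.Countable ∧ S ⊆ ⋃ i, t i ∧
      (∀ i, ediam (t i) ≤ 10 * ENNReal.ofReal R) ∧
      ∑' i, ediam (t i) ^ d ≤ 10 ^ d * M * ν univ := by
  choose! e hpos hle hν using h
  obtain ⟨U, hUS, hdisj, hcov⟩ :=
    Vitali.exists_disjoint_subfamily_covering_enlargement_closedBall S id e R hle 5 (by norm_num)
  have hsum : ∑' i : U, ν (closedBall (i : X) (e i)) ≤ ν univ :=
    (tsum_meas_le_meas_iUnion_of_disjoint ν (fun _ => measurableSet_closedBall)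
      fun (i j : U) hij => hdisj i.2 j.2 (Subtype.coe_injective.ne hij)).trans
      (measure_mono (subset_univ _))
  have hcount : U.Countable := by
    have hsupp := Summable.countable_support_ennreal (ne_top_of_le_ne_top (measure_ne_top ν _) hsum)
    refine countable_coe_iff.1 (countable_univ_iff.1 (hsupp.mono fun i _ => ?_))
    intro (hi : ν (closedBall (i : X) (e i)) = 0)
    have hball := hν i (hUS i.2)
    rw [hi, mul_zero, nonpos_iff_eq_zero] at hball
    exact (ENNReal.rpow_pos (ENNReal.ofReal_pos.2 (hpos i (hUS i.2)))
      ENNReal.ofReal_ne_top).ne' hball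
  have hdiam (i : U) : ediam (closedBall (i : X) (5 * e i)) ≤ 10 * ENNReal.ofReal (e i) := by
    refine (ediam_closedBall_le _ (by linarith [hpos i (hUS i.2)])).trans_eq ?_
    rw [ENNReal.ofReal_mul (by norm_num), ENNReal.ofReal_ofNat, ← mul_assoc]
    norm_num
  refine ⟨U, fun i => closedBall i (5 * e i), hcount, fun x hx => ?_, fun i => ?_, ?_⟩
  · obtain ⟨b, hb, hsub⟩ := hcov x hx
    exact mem_iUnion.2 ⟨⟨b, hb⟩, hsub (mem_closedBall_self (hpos x hx).le)⟩
  · exact (hdiam i).trans (by gcongr; exact hle i (hUS i.2))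
  calc ∑' i : U, ediam (closedBall (i : X) (5 * e i)) ^ d
      ≤ ∑' i : U, 10 ^ d * M * ν (closedBall (i : X) (e i)) := ENNReal.tsum_le_tsum fun i =>
        calc ediam (closedBall (i : X) (5 * e i)) ^ d
            ≤ (10 * ENNReal.ofReal (e i)) ^ d := ENNReal.rpow_le_rpow (hdiam i) hd
          _ = 10 ^ d * ENNReal.ofReal (e i) ^ d := ENNReal.mul_rpow_of_nonneg _ _ hd
          _ ≤ 10 ^ d * (M * ν (closedBall (i : X) (e i))) := by gcongr; exact hν i (hUS i.2)
          _ = 10 ^ d * M * ν (closedBall (i : X) (e i)) := (mul_assoc _ _ _).symm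
    _ = 10 ^ d * M * ∑' i : U, ν (closedBall (i : X) (e i)) := ENNReal.tsum_mul_left
    _ ≤ 10 ^ d * M * ν univ := by gcongr

variable [BorelSpace X]

theorem hausdorffMeasure_eq_zero_of_frequently_le_mul {d : ℝ} (hd : 0 ≤ d) {ν : ℕ → Measure X}
    [∀ n, IsFiniteMeasure (ν n)] (hν : Tendsto (fun n => ν n univ) atTop (𝓝 0)) {S : Set X}
    {M : ℝ≥0∞} (hM : M ≠ ⊤)
    (h : ∀ x ∈ S, ∀ n, ∃ᶠ ε in 𝓝[>] 0, ENNReal.ofReal ε ^ d ≤ M * ν n (closedBall x ε)) :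
    μH[d] S = 0 := by
  have hsmall (n : ℕ) (x : X) (hx : x ∈ S) : ∃ ε, 0 < ε ∧ ε ≤ 1 / ((n : ℝ) + 1) ∧
      ENNReal.ofReal ε ^ d ≤ M * ν n (closedBall x ε) := by
    obtain ⟨ε, hle, hpos, hn⟩ :=
      ((h x hx n).and_eventually (Ioc_mem_nhdsGT Nat.one_div_pos_of_nat)).exists
    exact ⟨ε, hpos, hn, hle⟩
  choose U t hcount hcov hdiam hsum using fun n =>
    exists_countable_cover_tsum_ediam_rpow_le hd (ν n) (hsmall n)
  have (n : ℕ) : Countable (U n) := (hcount n).to_subtype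
  have hscale : Tendsto (fun n : ℕ => 10 * ENNReal.ofReal (1 / ((n : ℝ) + 1))) atTop (𝓝 0) := by
    simpa using ENNReal.Tendsto.const_mul
      (ENNReal.tendsto_ofReal (tendsto_one_div_add_atTop_nhds_zero_nat (𝕜 := ℝ)))
      (.inr (ENNReal.ofNat_ne_top (n := 10)))
  have hlim : Tendsto (fun n => 10 ^ d * M * ν n univ) atTop (𝓝 0) := by
    simpa using ENNReal.Tendsto.const_mul hν
      (.inr (ENNReal.mul_ne_top (ENNReal.rpow_ne_top_of_nonneg hd ENNReal.ofNat_ne_top) hM))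
  refine le_antisymm ?_ zero_le
  calc μH[d] S ≤ liminf (fun n => ∑' i, ediam (t n i) ^ d) atTop :=
        Measure.hausdorffMeasure_le_liminf_tsum d S _ hscale t (.of_forall hdiam) (.of_forall hcov)
    _ ≤ liminf (fun n => 10 ^ d * M * ν n univ) atTop := liminf_le_liminf (.of_forall hsum)
    _ = 0 := hlim.liminf_eq

theorem hausdorffMeasure_eq_zero_of_frequently_le_exists_mul {d : ℝ} (hd : 0 ≤ d)
    {ν : ℕ → Measure X} [∀ n, IsFiniteMeasure (ν n)]
    (hν : Tendsto (fun n => ν n univ) atTop (𝓝 0)) {S : Set X}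
    (h : ∀ x ∈ S, ∃ M ≠ ⊤, ∀ n, ∃ᶠ ε in 𝓝[>] 0,
      ENNReal.ofReal ε ^ d ≤ M * ν n (closedBall x ε)) :
    μH[d] S = 0 := by
  have hcover : S ⊆ ⋃ N : ℕ, {x | ∀ n, ∃ᶠ ε in 𝓝[>] 0,
      ENNReal.ofReal ε ^ d ≤ N * ν n (closedBall x ε)} := fun x hx => by
    obtain ⟨M, hM, hfreq⟩ := h x hx
    obtain ⟨N, hN⟩ := ENNReal.exists_nat_gt hM
    exact mem_iUnion.2 ⟨N, fun n => (hfreq n).mono fun ε hε => hε.trans (by gcongr)⟩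
  exact measure_mono_null hcover (measure_iUnion_null fun N =>
    hausdorffMeasure_eq_zero_of_frequently_le_mul hd hν (ENNReal.natCast_ne_top N) fun _ hx => hx)

end Covering

section AverageLebesguePoints

variable {X : Type*} [MetricSpace X] [MeasurableSpace X] [BorelSpace X] (μ : Measure X) {s p : ℝ}
  {W : X → X → ℝ≥0∞}

theorem exists_frequently_rpow_le_mul_nearDiagonalMeasure (hp : 0 ≤ p + s) (hW : ∀ z, W z z = 0)
    {E : Set X} {x : X} (hx : x ∈ interior E) (hdens : HasPosLowerDensity μ s x)
    (hpos : 0 < limsup (doubleAvg μ W x) (𝓝[>] 0)) :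
    ∃ M ≠ ⊤, ∀ δ > 0, ∃ᶠ ε in 𝓝[>] 0, ENNReal.ofReal ε ^ (s - p) ≤
      M * nearDiagonalMeasure (μ.restrict E) (fun z y => W z y / edist z y ^ (p + s)) δ
        (closedBall x ε) := by
  obtain ⟨c, hc0, hc⟩ := hdens
  obtain ⟨t, ht0, ht⟩ := exists_between hpos
  have htop : t ≠ ⊤ := ht.ne_top
  refine ⟨t⁻¹ * (c⁻¹ ^ 2 * 2 ^ (p + s)), by finiteness, fun δ hδ => ?_⟩
  have hball : ∀ᶠ ε in 𝓝[>] (0 : ℝ), closedBall x ε ⊆ E :=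
    (eventually_closedBall_subset (mem_interior_iff_mem_nhds.1 hx)).filter_mono nhdsWithin_le_nhds
  refine ((frequently_lt_of_lt_limsup (by isBoundedDefault) ht).and_eventually
    (hc.and (hball.and (Ioc_mem_nhdsGT (half_pos hδ))))).mono ?_
  rintro ε ⟨hlt, hcε, hE, hε, hεδ⟩
  rw [mul_assoc, ← ENNReal.mul_le_iff_le_inv ht0.ne' htop]
  calc t * ENNReal.ofReal ε ^ (s - p)
      ≤ ENNReal.ofReal ε ^ (s - p) * doubleAvg μ W x ε := by
        rw [mul_comm]
        gcongr
    _ ≤ _ := rpow_mul_doubleAvg_le μ hp hW hε hcε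
    _ ≤ _ := by
        gcongr
        exact setLIntegral_closedBall_le_nearDiagonalMeasure μ _ hE (by linarith)

theorem hausdorffMeasure_interior_limsup_doubleAvg_pos (hp : |p| ≤ s) (hW : ∀ z, W z z = 0)
    {E : Set X} (hfin : ∫⁻ z in E, ∫⁻ y in E, W z y / edist z y ^ (p + s) ∂μ ∂μ < ⊤) :
    μH[s - p] {x ∈ interior E | HasPosLowerDensity μ s x ∧
      0 < limsup (doubleAvg μ W x) (𝓝[>] 0)} = 0 := by
  obtain ⟨hp0, hps⟩ := abs_le.1 hp
  have hδ : Tendsto (fun n : ℕ => 1 / ((n : ℝ) + 1)) atTop (𝓝[>] 0) :=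
    tendsto_nhdsWithin_iff.2 ⟨tendsto_one_div_add_atTop_nhds_zero_nat,
      .of_forall fun n => mem_Ioi.2 Nat.one_div_pos_of_nat⟩
  have := isFiniteMeasure_nearDiagonalMeasure hfin
  have hlim := nearDiagonalMeasure_univ_tendsto_zero (fun z => by rw [hW, ENNReal.zero_div]) hfin
  refine hausdorffMeasure_eq_zero_of_frequently_le_exists_mul (by linarith) (hlim.comp hδ) ?_
  rintro x ⟨hx, hdens, hpos⟩
  obtain ⟨M, hM, hfreq⟩ :=
    exists_frequently_rpow_le_mul_nearDiagonalMeasure μ (by linarith) hW hx hdens hpos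
  exact ⟨M, hM, fun n => hfreq _ Nat.one_div_pos_of_nat⟩

end AverageLebesguePoints

theorem statement1_general {X : Type*} [MetricSpace X] [MeasurableSpace X] [BorelSpace X]
    (μ : Measure X) {s p : ℝ} (hp : |p| ≤ s)
    (hμ : ∀ x : X, (𝓝[≠] x).NeBot → HasPosLowerDensity μ s x)
    {W : X → X → ℝ≥0∞} (hW : ∀ z, W z z = 0)
    (hfin : ∀ (x : X) (R : ℝ), 0 < R →
      ∫⁻ z in closedBall x R, ∫⁻ y in closedBall x R, W z y / edist z y ^ (p + s) ∂μ ∂μ < ⊤) :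
    μH[s - p] {x | 0 < limsup (doubleAvg μ W x) (𝓝[>] 0)} = 0 := by
  rcases isEmpty_or_nonempty X with _ | ⟨⟨x₀⟩⟩
  · rw [eq_empty_of_isEmpty {x | _}, measure_empty]
  refine measure_mono_null (fun x hx => mem_iUnion.2 ?_) (measure_iUnion_null fun m : ℕ =>
    hausdorffMeasure_interior_limsup_doubleAvg_pos μ hp hW (hfin x₀ (m + 1) m.cast_add_one_pos))
  obtain ⟨m, hm⟩ := exists_nat_ge (dist x x₀)
  refine ⟨m, ball_subset_interior_closedBall (mem_ball.2 (by linarith)),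
    hμ x (neBot_iff.2 fun hbot => ?_), hx⟩
  exact hx.ne' (limsup_doubleAvg_eq_zero_of_isOpen_singleton μ (hW x)
    ((isOpen_singleton_iff_punctured_nhds x).2 hbot))

/-- Average Lebesgue points of fractional Sobolev functions: the set of points where
the double averages do not tend to `0` is `H^{s-rq}`-null. -/
theorem statement1 {X Y : Type*} [MetricSpace X] [MeasurableSpace X] [BorelSpace X]
    [MetricSpace Y] [MeasurableSpace Y] [BorelSpace Y]
    (μ : Measure X) (s r q : ℝ) (hs : 0 < s)
    (hμ : IsAhlfors μ s) (hr0 : 0 < r) (hr1 : r < 1) (hq : 0 < q) (hrq : r * q ≤ s)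
    (u : X → Y) (hu : MemFracSobolevLoc μ r q s u) :
    μH[s - r * q] {x : X |
      0 < limsup (fun ε : ℝ =>
        doubleAvg μ (fun z y => edist (u z) (u y) ^ q) x ε) (𝓝[>] (0 : ℝ))} = 0 := by
  exact statement1_general μ (by rwa [abs_of_pos (mul_pos hr0 hq)])
    (fun x _ => hμ.hasPosLowerDensity x) (fun z => by simp [hq]) hu.2.2
end

section
/- Let X be a metric space, μ an Ahlfors s-regular Borel measure on X for some s ∈ (0,∞), (Y,ρ) a complete metric space, 0 ≤ r ≤ 1 and 0 < q < ∞ with rq ≤ s, and u ∈ B^r_{q,∞}(X,μ;Y). Then there exists a set Θ ⊂ X with Hausdorff dimension at most s − rq such that every point x ∈ X \ Θ is a Lebesgue point of u, i.e. there exists u*(x) ∈ Y with lim_{ε→0⁺} ⨍_{B_ε(x)} ρ(u(z),u*(x))^q dμ(z) = 0. -/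
open MeasureTheory Metric Filter Set
open scoped ENNReal Topology

/-- `u ∈ B^r_{q,∞}(X,μ;Y)`. -/
def MemBesov {X Y : Type*} [MetricSpace X] [MeasurableSpace X] [MetricSpace Y]
    [MeasurableSpace Y] [BorelSpace Y]
    (μ : Measure X) (r q : ℝ) (u : X → Y) : Prop :=
  Measurable u ∧
  (∀ (x : X) (R : ℝ), 0 < R →
    ∫⁻ z in closedBall x R, ∫⁻ y in closedBall x R, edist (u z) (u y) ^ q ∂μ ∂μ < ⊤) ∧
  (⨆ (t : ℝ) (_ : 0 < t),
    ∫⁻ x, (ENNReal.ofReal t ^ (r * q))⁻¹ *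
      ((μ (closedBall x t))⁻¹ * ∫⁻ z in closedBall x t, edist (u x) (u z) ^ q ∂μ) ∂μ) < ⊤

open scoped NNReal

/-!
Say that `x` is bad at scale `ρ` if the `q`-mean oscillation of `u` over `B_ρ(x)` is at least
`ρ^η`. Choosing a maximal `2ρ`-separated family of bad points, the balls `B_ρ` around them are
disjoint, so the Besov energy at scale `2ρ` pays for all of them at once: there are at most
`C ρ^(rq - s - η)` points in the family, and the `2ρ`-balls around them cover the bad set. Hence
over the scales `ρ = R 2⁻ᵏ` the sums of `diam^(s - rq + 2η)` converge, and the points which are bad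
at infinitely many scales are null for the Hausdorff measure of dimension `s - rq + 2η`.

At any other point the mean oscillation decays geometrically along the dyadic balls. In each ball
some constant `y k` approximates `u` almost as well as a typical value of `u` does; by doubling,
consecutive constants are geometrically close, and their limit is the Lebesgue value `u*(x)`.
-/

section HausdorffCantelli

variable {ι X : Type*} [EMetricSpace X] [MeasurableSpace X] [BorelSpace X] {d : ℝ}

theorem hausdorffMeasure_setOf_frequently_cofinite_eq_zero [Countable ι] {U : ι → Set X}
    (hd : 0 < d) (hU : ∑' i, ediam (U i) ^ d ≠ ∞) :
    μH[d] {x | ∃ᶠ i in cofinite, x ∈ U i} = 0 := by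
  let tail (F : Finset ι) : ℝ≥0∞ := ∑' i : {i // i ∉ F}, ediam (U i) ^ d
  have tendsto_tail : Tendsto tail atTop (𝓝 0) := ENNReal.tendsto_tsum_compl_atTop_zero hU
  have tendsto_diam_bound : Tendsto (fun F => tail F ^ d⁻¹) atTop (𝓝 0) := by
    simpa [hd] using tendsto_tail.ennrpow_const d⁻¹
  have diam_le (F : Finset ι) (i : {i // i ∉ F}) : ediam (U i) ≤ tail F ^ d⁻¹ :=
    (ENNReal.le_rpow_inv_iff hd).2 (ENNReal.le_tsum i)
  have covers (F : Finset ι) :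
      {x | ∃ᶠ i in cofinite, x ∈ U i} ⊆ ⋃ i : {i // i ∉ F}, U i := by
    intro x hx
    obtain ⟨i, hiU, hiF⟩ := (hx.and_eventually F.eventually_cofinite_notMem).exists
    exact mem_iUnion.2 ⟨⟨i, hiF⟩, hiU⟩
  refine nonpos_iff_eq_zero.1 ?_
  calc μH[d] {x | ∃ᶠ i in cofinite, x ∈ U i}
      ≤ liminf tail atTop :=
        Measure.hausdorffMeasure_le_liminf_tsum (ι := fun F : Finset ι => {i // i ∉ F}) d _ _
          tendsto_diam_bound (fun _ i => U i) (.of_forall diam_le) (.of_forall covers)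
    _ = 0 := tendsto_tail.liminf_eq

theorem hausdorffMeasure_setOf_frequently_eq_zero_of_isCover {S N : ℕ → Set X} {ρ : ℕ → ℝ≥0}
    (hd : 0 < d) (hN : ∀ k, (N k).Countable) (hS : ∀ k, IsCover (ρ k) (S k) (N k))
    (hsum : ∑' k, ((N k).encard : ℝ≥0∞) * (2 * ρ k) ^ d ≠ ∞) :
    μH[d] {x | ∃ᶠ k in atTop, x ∈ S k} = 0 := by
  have (k : ℕ) : Countable (N k) := (hN k).to_subtype
  let U (p : Σ k, N k) : Set X := closedEBall (p.2 : X) (ρ p.1)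
  have hU : ∑' p, ediam (U p) ^ d ≠ ∞ := by
    refine ne_top_of_le_ne_top hsum ?_
    rw [ENNReal.tsum_sigma']
    refine ENNReal.tsum_le_tsum fun k => ?_
    rw [← ENNReal.tsum_set_const]
    exact ENNReal.tsum_le_tsum fun x => ENNReal.rpow_le_rpow ediam_closedEBall_le hd.le
  refine measure_mono_null (fun x hx => ?_)
    (hausdorffMeasure_setOf_frequently_cofinite_eq_zero hd hU)
  rw [mem_ofPred_eq, Nat.frequently_atTop_iff_infinite] at hx
  refine frequently_cofinite_iff_infinite.2 (.of_image Sigma.fst (hx.mono fun k hk => ?_))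
  obtain ⟨y, hy, hxy⟩ := mem_iUnion₂.1 (isCover_iff_subset_iUnion_closedEBall.1 (hS k) hk)
  exact ⟨⟨k, y, hy⟩, hxy, rfl⟩

end HausdorffCantelli

section Packing

theorem exists_subset_isSeparated_isCover {X : Type*} [PseudoEMetricSpace X] (ε : ℝ≥0)
    (S : Set X) : ∃ N ⊆ S, IsSeparated ε N ∧ IsCover ε S N := by
  obtain ⟨N, hN⟩ := zorn_subset {N | N ⊆ S ∧ IsSeparated ε N} fun c hc hchain =>
    ⟨⋃₀ c, ⟨sUnion_subset fun t ht => (hc ht).1,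
      (pairwise_sUnion hchain.directedOn).2 fun t ht => (hc ht).2⟩,
      fun _ => subset_sUnion_of_mem⟩
  exact ⟨N, hN.prop.1, hN.prop.2, .of_maximal_isSeparated hN⟩

variable {X : Type*} [PseudoMetricSpace X] [MeasurableSpace X] [OpensMeasurableSpace X]
  {μ : Measure X}

theorem encard_mul_le_lintegral_of_isSeparated {N : Set X} {ρ : ℝ≥0} {a : ℝ≥0∞} {g : X → ℝ≥0∞}
    (hN : IsSeparated ↑(2 * ρ) N) (ha : ∀ x ∈ N, a ≤ ∫⁻ z in closedBall x ρ, g z ∂μ) :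
    (N.encard : ℝ≥0∞) * a ≤ ∫⁻ z, g z ∂μ := by
  have disjoint_balls : Pairwise (Function.onFun Disjoint fun x : N => closedBall (x : X) ρ) := by
    intro x y hxy
    have hlt : ((2 * ρ : ℝ≥0) : ℝ≥0∞) < edist (x : X) y :=
      hN x.2 y.2 (Subtype.coe_injective.ne hxy)
    rw [edist_nndist, ENNReal.coe_lt_coe, ← NNReal.coe_lt_coe, coe_nndist] at hlt
    exact closedBall_disjoint_closedBall (by push_cast at hlt; linarith)
  calc (N.encard : ℝ≥0∞) * a
      = ∑' _ : N, a := (ENNReal.tsum_set_const N a).symm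
    _ ≤ ∑' x : N, μ.withDensity g (closedBall (x : X) ρ) :=
        ENNReal.tsum_le_tsum fun x =>
          (ha x x.2).trans_eq (withDensity_apply g measurableSet_closedBall).symm
    _ ≤ μ.withDensity g (⋃ x : N, closedBall (x : X) ρ) :=
        tsum_meas_le_meas_iUnion_of_disjoint _ (fun _ => measurableSet_closedBall) disjoint_balls
    _ ≤ μ.withDensity g univ := measure_mono (subset_univ _)
    _ = ∫⁻ z, g z ∂μ := by rw [withDensity_apply g .univ, setLIntegral_univ]

end Packing

section Averages

theorem edist_rpow_le_LpAddConst_mul {Y : Type*} [PseudoEMetricSpace Y] {q : ℝ} (hq : 0 ≤ q)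
    (a b c : Y) :
    edist a c ^ q ≤ ENNReal.LpAddConst (ENNReal.ofReal q)⁻¹ * (edist a b ^ q + edist b c ^ q) :=
  (ENNReal.rpow_le_rpow (edist_triangle a b c) hq).trans
    (ENNReal.rpow_add_le_mul_rpow_add_rpow' _ _ hq)

variable {X : Type*} [MeasurableSpace X] {μ : Measure X}

theorem laverage_const_mul_add {f : X → ℝ≥0∞} {c : ℝ≥0∞} (hc : c ≠ ∞) (hf : AEMeasurable f μ)
    (g : X → ℝ≥0∞) :
    ⨍⁻ x, c * (f x + g x) ∂μ = c * (⨍⁻ x, f x ∂μ + ⨍⁻ x, g x ∂μ) := by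
  simp only [laverage]
  rw [lintegral_const_mul' _ _ hc, lintegral_add_left' (hf.smul_measure _)]

theorem setLAverage_le_mul_setLAverage {s t : Set X} {D : ℝ≥0} (hst : s ⊆ t)
    (hD : μ t ≤ D * μ s) (f : X → ℝ≥0∞) :
    ⨍⁻ x in s, f x ∂μ ≤ D * ⨍⁻ x in t, f x ∂μ := by
  rcases eq_or_ne (μ t) 0 with ht | ht
  · simp [laverage, Measure.restrict_eq_zero.2 (measure_mono_null hst ht)]
  have hD0 : (D : ℝ≥0∞) ≠ 0 := fun h => ht (by simpa [h] using hD)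
  have inv_le : (μ s)⁻¹ ≤ D * (μ t)⁻¹ :=
    calc (μ s)⁻¹ = D * (D * μ s)⁻¹ := by
          rw [ENNReal.mul_inv (.inl hD0) (.inl ENNReal.coe_ne_top),
            ENNReal.mul_inv_cancel_left hD0 ENNReal.coe_ne_top]
      _ ≤ D * (μ t)⁻¹ := by gcongr
  rw [setLAverage_eq, setLAverage_eq, ENNReal.div_eq_inv_mul, ENNReal.div_eq_inv_mul, ← mul_assoc]
  exact mul_le_mul' inv_le (lintegral_mono_set hst)

variable {Y : Type*} [PseudoEMetricSpace Y] [MeasurableSpace Y] [OpensMeasurableSpace Y]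
  {u : X → Y} {q : ℝ}

theorem aemeasurable_edist_const_rpow (hu : AEMeasurable u μ) (a : Y) :
    AEMeasurable (fun z => edist (u z) a ^ q) μ :=
  (measurable_edist_left.comp_aemeasurable hu).pow_const q

theorem edist_rpow_le_laverage [IsFiniteMeasure μ] [NeZero μ] (hq : 0 ≤ q)
    (hu : AEMeasurable u μ) (a b : Y) :
    edist a b ^ q ≤ ENNReal.LpAddConst (ENNReal.ofReal q)⁻¹ *
      (⨍⁻ z, edist (u z) a ^ q ∂μ + ⨍⁻ z, edist (u z) b ^ q ∂μ) := by
  rw [← laverage_const_mul_add (ENNReal.LpAddConst_lt_top _).ne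
    (aemeasurable_edist_const_rpow hu a), ← laverage_const μ (edist a b ^ q)]
  refine laverage_mono_ae (.of_forall fun z => ?_)
  simpa only [edist_comm a] using edist_rpow_le_LpAddConst_mul hq a (u z) b

theorem laverage_edist_rpow_le [IsFiniteMeasure μ] [NeZero μ] (hq : 0 ≤ q)
    (hu : AEMeasurable u μ) (a b : Y) :
    ⨍⁻ z, edist (u z) b ^ q ∂μ ≤ ENNReal.LpAddConst (ENNReal.ofReal q)⁻¹ *
      (⨍⁻ z, edist (u z) a ^ q ∂μ + edist a b ^ q) := by
  rw [← laverage_const μ (edist a b ^ q),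
    ← laverage_const_mul_add (ENNReal.LpAddConst_lt_top _).ne
      (aemeasurable_edist_const_rpow hu a)]
  exact laverage_mono_ae (.of_forall fun z => edist_rpow_le_LpAddConst_mul hq (u z) a b)

end Averages

theorem cauchySeq_of_edist_rpow_le_geometric {Y : Type*} [PseudoEMetricSpace Y] {y : ℕ → Y}
    {q : ℝ} {K θ : ℝ≥0∞} (hq : 0 < q) (hK : K ≠ ∞) (hθ : θ < 1)
    (hy : ∀ k, edist (y k) (y (k + 1)) ^ q ≤ K * θ ^ k) : CauchySeq y := by
  refine cauchySeq_of_edist_le_geometric (θ ^ q⁻¹) (K ^ q⁻¹)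
    (ENNReal.rpow_lt_one hθ (inv_pos.2 hq)) (ENNReal.rpow_ne_top_of_nonneg (inv_pos.2 hq).le hK)
    fun k => ?_
  calc edist (y k) (y (k + 1)) ≤ (K * θ ^ k) ^ q⁻¹ := (ENNReal.le_rpow_inv_iff hq).2 (hy k)
    _ = K ^ q⁻¹ * (θ ^ q⁻¹) ^ k := by
        rw [ENNReal.mul_rpow_of_nonneg _ _ (inv_pos.2 hq).le, ← ENNReal.rpow_natCast,
          ← ENNReal.rpow_natCast, ← ENNReal.rpow_mul, ← ENNReal.rpow_mul, mul_comm q⁻¹]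

section MeanOscillation

variable {X Y : Type*} [MeasurableSpace X] [PseudoEMetricSpace Y]

/-- The `q`-mean oscillation `⨍_B ⨍_B ρ(u(z), u(y))^q` of `u` over the set `B`, which compares `u`
with itself and thus makes sense without a notion of mean value in `Y`. -/
noncomputable def meanOscillation (μ : Measure X) (q : ℝ) (u : X → Y) (B : Set X) : ℝ≥0∞ :=
  ⨍⁻ z in B, ⨍⁻ y in B, edist (u z) (u y) ^ q ∂μ ∂μ

variable {μ : Measure X} {q : ℝ} {u : X → Y}

theorem exists_setLAverage_edist_rpow_le_of_meanOscillation_lt {B : Set X} {K : ℝ≥0∞}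
    (hB₀ : μ B ≠ 0) (hB : μ B ≠ ∞) (hK : meanOscillation μ q u B < K) :
    ∃ a, ⨍⁻ z in B, edist (u z) a ^ q ∂μ ≤ K := by
  have : IsFiniteMeasure (μ.restrict B) := isFiniteMeasure_restrict.2 hB
  have : NeZero (μ.restrict B) := ⟨Measure.restrict_eq_zero.not.2 hB₀⟩
  by_contra! h
  refine hK.not_ge ?_
  calc K = ⨍⁻ _ in B, K ∂μ := (laverage_const _ _).symm
    _ ≤ meanOscillation μ q u B := laverage_mono_ae <| .of_forall fun z => by
        simpa only [edist_comm (u z)] using (h (u z)).le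

theorem exists_tendsto_setLAverage_edist_rpow [MeasurableSpace Y] [OpensMeasurableSpace Y]
    [CompleteSpace Y] {B : ℕ → Set X} {D : ℝ≥0} {K θ : ℝ≥0∞} (hq : 0 < q)
    (hu : AEMeasurable u μ) (hanti : Antitone B) (hB₀ : ∀ k, μ (B k) ≠ 0)
    (hB : μ (B 0) ≠ ∞) (hD : ∀ k, μ (B k) ≤ D * μ (B (k + 1))) (hK : K ≠ ∞) (hθ : θ < 1)
    (hosc : ∀ k, meanOscillation μ q u (B k) < K * θ ^ k) :
    ∃ a, Tendsto (fun k => ⨍⁻ z in B k, edist (u z) a ^ q ∂μ) atTop (𝓝 0) := by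
  replace hB (k : ℕ) : μ (B k) ≠ ∞ := measure_ne_top_of_subset (hanti k.zero_le) hB
  have (k : ℕ) : IsFiniteMeasure (μ.restrict (B k)) := isFiniteMeasure_restrict.2 (hB k)
  have (k : ℕ) : NeZero (μ.restrict (B k)) := ⟨Measure.restrict_eq_zero.not.2 (hB₀ k)⟩
  choose y hy using fun k =>
    exists_setLAverage_edist_rpow_le_of_meanOscillation_lt (hB₀ k) (hB k) (hosc k)
  set C := ENNReal.LpAddConst (ENNReal.ofReal q)⁻¹
  have hC : C ≠ ∞ := (ENNReal.LpAddConst_lt_top _).ne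
  have edist_succ_rpow_le (k : ℕ) : edist (y k) (y (k + 1)) ^ q ≤ C * (D + 1) * K * θ ^ k := by
    calc edist (y k) (y (k + 1)) ^ q
        ≤ C * (⨍⁻ z in B (k + 1), edist (u z) (y k) ^ q ∂μ
            + ⨍⁻ z in B (k + 1), edist (u z) (y (k + 1)) ^ q ∂μ) :=
          edist_rpow_le_laverage hq.le hu.restrict _ _
      _ ≤ C * (D * (K * θ ^ k) + K * θ ^ k) := by
          gcongr
          · exact (setLAverage_le_mul_setLAverage (hanti k.le_succ) (hD k) _).trans
              (by gcongr; exact hy k)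
          · exact (hy (k + 1)).trans
              (mul_le_mul_right (pow_le_pow_right_of_le_one' hθ.le k.le_succ) K)
      _ = C * (D + 1) * K * θ ^ k := by ring
  obtain ⟨a, ha⟩ := cauchySeq_tendsto_of_complete
    (cauchySeq_of_edist_rpow_le_geometric hq (by finiteness) hθ edist_succ_rpow_le)
  have edist_tendsto : Tendsto (fun k => edist (y k) a ^ q) atTop (𝓝 0) := by
    simpa [hq] using (tendsto_iff_edist_tendsto_0.1 ha).ennrpow_const q
  have geometric_tendsto : Tendsto (fun k => K * θ ^ k) atTop (𝓝 0) := by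
    simpa using ENNReal.Tendsto.const_mul (ENNReal.tendsto_pow_atTop_nhds_zero_of_lt_one hθ)
      (.inr hK)
  have bound_tendsto : Tendsto (fun k => C * (K * θ ^ k + edist (y k) a ^ q)) atTop (𝓝 0) := by
    simpa using ENNReal.Tendsto.const_mul (geometric_tendsto.add edist_tendsto) (.inr hC)
  exact ⟨a, tendsto_of_tendsto_of_tendsto_of_le_of_le tendsto_const_nhds bound_tendsto
    (fun _ => zero_le) fun k => (laverage_edist_rpow_le hq.le hu.restrict (y k) a).trans
      (by gcongr; exact hy k)⟩

end MeanOscillation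

section Dyadic

/-- The dyadic sequence of scales `R, R / 2, R / 4, …`. -/
noncomputable def dyadicScale (R : ℝ≥0) (k : ℕ) : ℝ≥0 := R * 2⁻¹ ^ k

theorem dyadicScale_add (R : ℝ≥0) (k l : ℕ) :
    dyadicScale R (k + l) = dyadicScale R l * 2⁻¹ ^ k := by
  simp only [dyadicScale, pow_add]; ring

theorem two_mul_dyadicScale_succ (R : ℝ≥0) (k : ℕ) :
    2 * dyadicScale R (k + 1) = dyadicScale R k := by
  simp only [dyadicScale, pow_succ]; field_simp

theorem dyadicScale_pos {R : ℝ≥0} (hR : 0 < R) (k : ℕ) : 0 < dyadicScale R k := by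
  unfold dyadicScale; positivity

theorem antitone_dyadicScale (R : ℝ≥0) : Antitone (dyadicScale R) :=
  fun _ _ hkl => mul_le_mul_right (pow_le_pow_right_of_le_one' (by norm_num) hkl) R

theorem dyadicScale_le (R : ℝ≥0) (k : ℕ) : dyadicScale R k ≤ R :=
  mul_le_of_le_one_right' (pow_le_one' (by norm_num) k)

theorem tendsto_dyadicScale_nhdsGT_zero {R : ℝ≥0} (hR : 0 < R) :
    Tendsto (fun k => (dyadicScale R k : ℝ)) atTop (𝓝[>] 0) := by
  refine tendsto_nhdsWithin_iff.2 ⟨?_, .of_forall fun k => dyadicScale_pos hR k⟩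
  simpa [dyadicScale] using
    (tendsto_pow_atTop_nhds_zero_of_lt_one (r := (2⁻¹ : ℝ)) (by norm_num) (by norm_num)).const_mul
      (R : ℝ)

theorem coe_dyadicScale_add_rpow (R : ℝ≥0) (η : ℝ) (k l : ℕ) :
    (dyadicScale R (k + l) : ℝ≥0∞) ^ η = (dyadicScale R l : ℝ≥0∞) ^ η * (2⁻¹ ^ η) ^ k := by
  rw [dyadicScale_add, ENNReal.coe_mul, ENNReal.coe_pow, ENNReal.coe_inv two_ne_zero,
    ENNReal.coe_ofNat,
    ENNReal.mul_rpow_of_ne_top ENNReal.coe_ne_top (by finiteness), ← ENNReal.rpow_natCast,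
    ← ENNReal.rpow_natCast, ← ENNReal.rpow_mul, ← ENNReal.rpow_mul, mul_comm η]

theorem tsum_dyadicScale_rpow_ne_top (R : ℝ≥0) {η : ℝ} (hη : 0 < η) :
    ∑' k, (dyadicScale R k : ℝ≥0∞) ^ η ≠ ∞ := by
  have ratio_lt_one : (2⁻¹ : ℝ≥0∞) ^ η < 1 := ENNReal.rpow_lt_one (by simp) hη
  calc ∑' k, (dyadicScale R k : ℝ≥0∞) ^ η
      = ∑' k, (dyadicScale R 0 : ℝ≥0∞) ^ η * (2⁻¹ ^ η) ^ k :=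
        tsum_congr fun k => coe_dyadicScale_add_rpow R η k 0
    _ = (dyadicScale R 0 : ℝ≥0∞) ^ η * (1 - 2⁻¹ ^ η)⁻¹ := by
        rw [ENNReal.tsum_mul_left, ENNReal.tsum_geometric]
    _ ≠ ∞ := ?_
  exact ENNReal.mul_ne_top (ENNReal.rpow_ne_top_of_nonneg hη.le ENNReal.coe_ne_top)
    (ENNReal.inv_ne_top.2 (tsub_pos_of_lt ratio_lt_one).ne')

theorem exists_forall_dyadicScale_of_eventually {P : ℝ → Prop} (hP : ∀ᶠ ε in 𝓝[>] 0, P ε) :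
    ∃ R : ℝ≥0, 0 < R ∧ ∀ k, P (dyadicScale R k) := by
  obtain ⟨R, hR, hP⟩ := mem_nhdsGT_iff_exists_Ioc_subset.1 hP
  lift R to ℝ≥0 using (mem_Ioi.1 hR).le
  exact ⟨R, hR, fun k => hP ⟨dyadicScale_pos hR k, dyadicScale_le R k⟩⟩

theorem eventually_nhdsGT_zero_exists_dyadicScale {R : ℝ≥0} (hR : 0 < R) (n : ℕ) :
    ∀ᶠ ε in 𝓝[>] (0 : ℝ), ∃ k ≥ n, ε ∈ Ioc (dyadicScale R (k + 1) : ℝ) (dyadicScale R k) := by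
  filter_upwards [Ioo_mem_nhdsGT (show (0 : ℝ) < dyadicScale R n from dyadicScale_pos hR n)]
    with ε ⟨hε, hεn⟩
  have hε_le : ε / dyadicScale R n ≤ 1 := (div_le_one (hε.trans hεn)).2 hεn.le
  obtain ⟨j, hj_lt, hj_le⟩ := exists_nat_pow_near_of_lt_one (div_pos hε (hε.trans hεn)) hε_le
    (y := (2⁻¹ : ℝ)) (by norm_num) (by norm_num)
  refine ⟨j + n, by lia, ?_, ?_⟩
  · rw [add_right_comm, dyadicScale_add]
    rw [lt_div_iff₀' (hε.trans hεn)] at hj_lt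
    simpa using hj_lt
  · rw [dyadicScale_add]
    rw [div_le_iff₀' (hε.trans hεn)] at hj_le
    simpa using hj_le

end Dyadic

theorem tendsto_setLAverage_closedBall_of_dyadicScale {X : Type*} [PseudoMetricSpace X]
    [MeasurableSpace X] {μ : Measure X} [IsUnifLocDoublingMeasure μ] {f : X → ℝ≥0∞} {x : X}
    {R : ℝ≥0} (hR : 0 < R)
    (hf : Tendsto (fun k => ⨍⁻ z in closedBall x (dyadicScale R k), f z ∂μ) atTop (𝓝 0)) :
    Tendsto (fun ε => ⨍⁻ z in closedBall x ε, f z ∂μ) (𝓝[>] 0) (𝓝 0) := by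
  let D : ℝ≥0 := IsUnifLocDoublingMeasure.scalingConstantOf μ 2
  have mul_tendsto :
      Tendsto (fun k => D * ⨍⁻ z in closedBall x (dyadicScale R k), f z ∂μ) atTop (𝓝 0) := by
    simpa using ENNReal.Tendsto.const_mul hf (.inr ENNReal.coe_ne_top)
  refine ENNReal.tendsto_nhds_zero.2 fun δ hδ => ?_
  obtain ⟨n, hn⟩ := eventually_atTop.1 (ENNReal.tendsto_nhds_zero.1 mul_tendsto δ hδ)
  filter_upwards [eventually_nhdsGT_zero_exists_dyadicScale hR n,
    IsUnifLocDoublingMeasure.eventually_measure_le_scaling_constant_mul μ 2]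
    with ε ⟨k, hkn, hlt, hle⟩ hdoubling
  have scale_le : (dyadicScale R k : ℝ) ≤ 2 * ε := by
    rw [← two_mul_dyadicScale_succ]; push_cast; linarith
  have measure_le := (measure_mono (closedBall_subset_closedBall scale_le)).trans (hdoubling x)
  exact (setLAverage_le_mul_setLAverage (closedBall_subset_closedBall hle) measure_le f).trans
    (hn k hkn)

/-- `x` is a Lebesgue point of `u`, with respect to `q`-th powers of the distance: for some
`a`, which plays the role of `u*(x)`, the averages `⨍_{B_ε(x)} ρ(u(z), a)^q` tend to `0`. -/
def IsLebesguePoint {X Y : Type*} [PseudoMetricSpace X] [MeasurableSpace X] [PseudoEMetricSpace Y]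
    (μ : Measure X) (q : ℝ) (u : X → Y) (x : X) : Prop :=
  ∃ a, Tendsto (fun ε => ⨍⁻ z in closedBall x ε, edist (u z) a ^ q ∂μ) (𝓝[>] 0) (𝓝 0)

theorem eventually_nhdsGT_zero_measure_closedBall_ne_top {X : Type*} [PseudoMetricSpace X]
    [MeasurableSpace X] (μ : Measure X) [IsLocallyFiniteMeasure μ] (x : X) :
    ∀ᶠ ε in 𝓝[>] (0 : ℝ), μ (closedBall x ε) ≠ ∞ := by
  obtain ⟨δ, hδ, hfin⟩ := (μ.finiteAt_nhds x).exists_mem_basis nhds_basis_closedBall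
  filter_upwards [Ioo_mem_nhdsGT hδ] with ε hε
  exact measure_ne_top_of_subset (closedBall_subset_closedBall hε.2.le) hfin.ne

theorem isLebesguePoint_of_eventually_meanOscillation_lt {X Y : Type*} [PseudoMetricSpace X]
    [MeasurableSpace X] [PseudoEMetricSpace Y] [MeasurableSpace Y] [OpensMeasurableSpace Y]
    [CompleteSpace Y] {μ : Measure X} [IsUnifLocDoublingMeasure μ] [IsLocallyFiniteMeasure μ]
    [μ.IsOpenPosMeasure] {q η : ℝ} {u : X → Y} {R : ℝ≥0} {x : X} (hq : 0 < q)
    (hu : AEMeasurable u μ) (hR : 0 < R) (hη : 0 < η)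
    (hosc : ∀ᶠ k in atTop,
      meanOscillation μ q u (closedBall x (dyadicScale R k)) < (dyadicScale R k : ℝ≥0∞) ^ η) :
    IsLebesguePoint μ q u x := by
  have scale_tendsto := tendsto_dyadicScale_nhdsGT_zero hR
  have eventually_doubling : ∀ᶠ k in atTop, μ (closedBall x (dyadicScale R k)) ≤
      IsUnifLocDoublingMeasure.scalingConstantOf μ 2 *
        μ (closedBall x (dyadicScale R (k + 1))) := by
    filter_upwards [(scale_tendsto.comp (tendsto_add_atTop_nat 1)).eventually
      (IsUnifLocDoublingMeasure.eventually_measure_le_scaling_constant_mul μ 2)] with k hk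
    simpa [← two_mul_dyadicScale_succ R k] using hk x
  obtain ⟨n, hn⟩ := eventually_atTop.1 <| (hosc.and eventually_doubling).and <|
    scale_tendsto.eventually (eventually_nhdsGT_zero_measure_closedBall_ne_top μ x)
  obtain ⟨a, ha⟩ := exists_tendsto_setLAverage_edist_rpow
    (B := fun k => closedBall x (dyadicScale R (k + n))) hq hu
    (fun k l hkl => closedBall_subset_closedBall (antitone_dyadicScale R (by lia)))
    (fun k => (measure_closedBall_pos μ x (dyadicScale_pos hR _)).ne')
    (hn (0 + n) (by lia)).2
    (fun k => by simpa only [add_right_comm] using (hn (k + n) (by lia)).1.2)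
    (ENNReal.rpow_ne_top_of_nonneg hη.le ENNReal.coe_ne_top)
    (ENNReal.rpow_lt_one (by simp) hη)
    (fun k => coe_dyadicScale_add_rpow R η k n ▸ (hn (k + n) (by lia)).1.1)
  exact ⟨a, tendsto_setLAverage_closedBall_of_dyadicScale hR ((tendsto_add_atTop_iff_nat n).1 ha)⟩

section BesovEnergy

variable {X Y : Type*} [MeasurableSpace X] [PseudoEMetricSpace Y] {q : ℝ} {u : X → Y}

/-- The energy `∫_X ⨍_{B_t(x)} ρ(u(x), u(z))^q` of `u` at scale `t`; the Besov condition
`u ∈ B^r_{q,∞}` bounds it by a multiple of `t^{rq}`. -/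
noncomputable def besovEnergy [PseudoMetricSpace X] (μ : Measure X) (q : ℝ) (u : X → Y) (t : ℝ) :
    ℝ≥0∞ :=
  ∫⁻ x, ⨍⁻ z in closedBall x t, edist (u x) (u z) ^ q ∂μ ∂μ

theorem mul_le_setLIntegral_of_le_meanOscillation [PseudoMetricSpace X] [OpensMeasurableSpace X]
    {μ : Measure X} {ρ D : ℝ≥0} {A m : ℝ≥0∞} {x : X}
    (hD : ∀ z ∈ closedBall x ρ, μ (closedBall z (2 * ρ)) ≤ D * μ (closedBall x ρ))
    (hm : m ≤ μ (closedBall x ρ)) (hA : A ≤ meanOscillation μ q u (closedBall x ρ)) :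
    A * m ≤ ∫⁻ z in closedBall x ρ,
      D * ⨍⁻ y in closedBall z (2 * ρ), edist (u z) (u y) ^ q ∂μ ∂μ := by
  have ball_subset {z : X} (hz : z ∈ closedBall x ρ) : closedBall x ρ ⊆ closedBall z (2 * ρ) :=
    closedBall_subset_closedBall' (by rw [dist_comm]; linarith [mem_closedBall.1 hz])
  calc A * m ≤ meanOscillation μ q u (closedBall x ρ) * μ (closedBall x ρ) := by gcongr
    _ ≤ ∫⁻ z in closedBall x ρ, ⨍⁻ y in closedBall x ρ, edist (u z) (u y) ^ q ∂μ ∂μ := by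
        rw [meanOscillation, setLAverage_eq, mul_comm]; exact ENNReal.mul_div_le
    _ ≤ ∫⁻ z in closedBall x ρ, D * ⨍⁻ y in closedBall z (2 * ρ), edist (u z) (u y) ^ q ∂μ ∂μ :=
        setLIntegral_mono' measurableSet_closedBall fun z hz =>
          setLAverage_le_mul_setLAverage (ball_subset hz) (hD z hz) _

theorem exists_isCover_setOf_le_meanOscillation [PseudoMetricSpace X] [OpensMeasurableSpace X]
    {μ : Measure X} {ρ D : ℝ≥0} {m : ℝ≥0∞}
    (hD : ∀ x, ∀ z ∈ closedBall x (ρ : ℝ), μ (closedBall z (2 * ρ)) ≤ D * μ (closedBall x ρ))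
    (hm : ∀ x, m ≤ μ (closedBall x ρ)) (A : ℝ≥0∞) :
    ∃ N, IsCover (2 * ρ) {x | A ≤ meanOscillation μ q u (closedBall x ρ)} N ∧
      (N.encard : ℝ≥0∞) * (A * m) ≤ D * besovEnergy μ q u (2 * ρ) := by
  obtain ⟨N, hN_subset, hN_sep, hN_cover⟩ := exists_subset_isSeparated_isCover (2 * ρ)
    {x | A ≤ meanOscillation μ q u (closedBall x ρ)}
  refine ⟨N, hN_cover, (encard_mul_le_lintegral_of_isSeparated hN_sep fun x hx =>
    mul_le_setLIntegral_of_le_meanOscillation (hD x) (hm x) (hN_subset hx)).trans_eq ?_⟩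
  rw [lintegral_const_mul' _ _ ENNReal.coe_ne_top, besovEnergy]

theorem mul_rpow_le_of_mul_rpow_mul_rpow_le {n E : ℝ≥0∞} {ρ c : ℝ≥0} {s α η : ℝ} (hρ : ρ ≠ 0)
    (hc : c ≠ 0) (h : n * (ρ ^ η * (c * ρ ^ s)) ≤ E * ρ ^ α) :
    n * ρ ^ (s - α + 2 * η) ≤ E * (c : ℝ≥0∞)⁻¹ * ρ ^ η := by
  have rpow_add (a b : ℝ) : (ρ : ℝ≥0∞) ^ (a + b) = ρ ^ a * ρ ^ b :=
    ENNReal.rpow_add _ _ (ENNReal.coe_ne_zero.2 hρ) ENNReal.coe_ne_top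
  calc n * (ρ : ℝ≥0∞) ^ (s - α + 2 * η)
      = n * (c * (c : ℝ≥0∞)⁻¹ * ρ ^ (η + s + (η - α))) := by
        rw [ENNReal.mul_inv_cancel (ENNReal.coe_ne_zero.2 hc) ENNReal.coe_ne_top, one_mul]
        ring_nf
    _ = n * (ρ ^ η * (c * ρ ^ s)) * ((c : ℝ≥0∞)⁻¹ * ρ ^ (η - α)) := by
        rw [rpow_add, rpow_add]; ring
    _ ≤ E * ρ ^ α * ((c : ℝ≥0∞)⁻¹ * ρ ^ (η - α)) := by gcongr
    _ = E * (c : ℝ≥0∞)⁻¹ * ρ ^ (α + (η - α)) := by rw [rpow_add]; ring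
    _ = E * (c : ℝ≥0∞)⁻¹ * ρ ^ η := by rw [add_sub_cancel]

theorem hausdorffMeasure_setOf_frequently_le_meanOscillation_eq_zero [MetricSpace X] [BorelSpace X]
    {μ : Measure X} {ρ : ℕ → ℝ≥0} {c D : ℝ≥0} {M : ℝ≥0∞} {s α η : ℝ} (hρ : ∀ k, ρ k ≠ 0)
    (hsum : ∑' k, (ρ k : ℝ≥0∞) ^ η ≠ ∞) (hc : c ≠ 0) (hM : M ≠ ∞) (hd : 0 < s - α + 2 * η)
    (hD : ∀ k x, ∀ z ∈ closedBall x (ρ k : ℝ),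
      μ (closedBall z (2 * ρ k)) ≤ D * μ (closedBall x (ρ k)))
    (hlow : ∀ k x, c * (ρ k : ℝ≥0∞) ^ s ≤ μ (closedBall x (ρ k)))
    (hE : ∀ k, besovEnergy μ q u (2 * ρ k) ≤ M * (ρ k : ℝ≥0∞) ^ α) :
    μH[s - α + 2 * η] {x | ∃ᶠ k in atTop,
      (ρ k : ℝ≥0∞) ^ η ≤ meanOscillation μ q u (closedBall x (ρ k))} = 0 := by
  choose N hN_cover hN_card using fun k =>
    exists_isCover_setOf_le_meanOscillation (q := q) (u := u) (hD k) (hlow k) ((ρ k : ℝ≥0∞) ^ η)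
  have card_mul_le (k : ℕ) : ((N k).encard : ℝ≥0∞) * ρ k ^ (s - α + 2 * η)
      ≤ D * M * (c : ℝ≥0∞)⁻¹ * ρ k ^ η :=
    mul_rpow_le_of_mul_rpow_mul_rpow_le (hρ k) hc <|
      (hN_card k).trans <| (mul_le_mul_right (hE k) _).trans_eq (mul_assoc _ _ _).symm
  have const_ne_top : D * M * (c : ℝ≥0∞)⁻¹ ≠ ∞ := by finiteness
  have hN_finite (k : ℕ) : (N k).Finite := by
    have rpow_ne_zero : (ρ k : ℝ≥0∞) ^ (s - α + 2 * η) ≠ 0 := by simp [hρ k]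
    have card_mul_ne_top := ne_top_of_le_ne_top
      (ENNReal.mul_ne_top const_ne_top (ENNReal.ne_top_of_tsum_ne_top hsum k)) (card_mul_le k)
    simpa using (ENNReal.lt_top_of_mul_ne_top_left card_mul_ne_top rpow_ne_zero).ne
  refine hausdorffMeasure_setOf_frequently_eq_zero_of_isCover hd (fun k => (hN_finite k).countable)
    hN_cover (ne_top_of_le_ne_top
      (b := ∑' k, (2 * 2) ^ (s - α + 2 * η) * (D * M * (c : ℝ≥0∞)⁻¹ * ρ k ^ η)) ?_ ?_)
  · simp only [ENNReal.tsum_mul_left]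
    finiteness
  · refine ENNReal.tsum_le_tsum fun k => ?_
    rw [ENNReal.coe_mul, ENNReal.coe_ofNat, ← mul_assoc, ENNReal.mul_rpow_of_nonneg _ _ hd.le,
      mul_left_comm]
    exact mul_le_mul_right (card_mul_le k) _

end BesovEnergy
section LowerAhlfors

variable {X : Type*} [PseudoMetricSpace X] [MeasurableSpace X] {μ : Measure X} {s : ℝ}

/-- The lower half of Ahlfors `s`-regularity, required for small radii only. -/
def IsLowerAhlfors (μ : Measure X) (s : ℝ) : Prop :=
  ∃ c : ℝ≥0, c ≠ 0 ∧ ∀ᶠ ε in 𝓝[>] (0 : ℝ), ∀ x, c * ENNReal.ofReal ε ^ s ≤ μ (closedBall x ε)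

theorem IsLowerAhlfors.isOpenPosMeasure (hμ : IsLowerAhlfors μ s) : μ.IsOpenPosMeasure := by
  obtain ⟨c, hc, hlow⟩ := hμ
  refine ⟨fun U hU ⟨x, hx⟩ => ?_⟩
  obtain ⟨δ, hδ, hball⟩ := nhds_basis_closedBall.mem_iff.1 (hU.mem_nhds hx)
  obtain ⟨ε, hε, hε₀, hεδ⟩ := (hlow.and (Ioo_mem_nhdsGT hδ)).exists
  have lower_pos : 0 < c * ENNReal.ofReal ε ^ s :=
    ENNReal.mul_pos (by simpa using hc)
      (ENNReal.rpow_pos (ENNReal.ofReal_pos.2 hε₀) ENNReal.ofReal_ne_top).ne'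
  exact (lower_pos.trans_le <| (hε x).trans <|
    measure_mono ((closedBall_subset_closedBall hεδ.le).trans hball)).ne'

theorem eventually_nhdsGT_zero_measure_closedBall_two_mul_le (μ : Measure X)
    [IsUnifLocDoublingMeasure μ] :
    ∀ᶠ ε in 𝓝[>] (0 : ℝ), ∀ x, ∀ z ∈ closedBall x ε, μ (closedBall z (2 * ε)) ≤
      IsUnifLocDoublingMeasure.scalingConstantOf μ 3 * μ (closedBall x ε) := by
  filter_upwards [IsUnifLocDoublingMeasure.eventually_measure_le_scaling_constant_mul μ 3]
    with ε hε x z hz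
  refine (measure_mono (closedBall_subset_closedBall' ?_)).trans (hε x)
  linarith [mem_closedBall.1 hz]

end LowerAhlfors

section LebesguePoints

variable {X Y : Type*} [MetricSpace X] [MeasurableSpace X] [BorelSpace X] [PseudoEMetricSpace Y]
  [MeasurableSpace Y] [OpensMeasurableSpace Y] [CompleteSpace Y] (μ : Measure X)
  [IsUnifLocDoublingMeasure μ] [IsLocallyFiniteMeasure μ]

theorem hausdorffMeasure_setOf_not_isLebesguePoint_eq_zero {s α q d : ℝ} {M : ℝ≥0∞} {u : X → Y}
    (hq : 0 < q) (hμ : IsLowerAhlfors μ s) (hu : AEMeasurable u μ) (hM : M ≠ ∞)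
    (hE : ∀ᶠ t in 𝓝[>] 0, besovEnergy μ q u t ≤ M * ENNReal.ofReal t ^ α) (hd : 0 < d)
    (hsd : s - α < d) : μH[d] {x | ¬ IsLebesguePoint μ q u x} = 0 := by
  have := hμ.isOpenPosMeasure
  obtain ⟨c, hc, hlow⟩ := hμ
  obtain ⟨R, hR, hbounds⟩ := exists_forall_dyadicScale_of_eventually <|
    (eventually_nhdsGT_zero_measure_closedBall_two_mul_le μ).and <|
    hlow.and (eventually_nhdsGT_zero_mul_left two_pos hE)
  simp only [ENNReal.ofReal_mul zero_le_two, ENNReal.ofReal_ofNat, ENNReal.ofReal_coe_nnreal,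
    ENNReal.mul_rpow_of_ne_top ENNReal.ofNat_ne_top ENNReal.coe_ne_top, ← mul_assoc] at hbounds
  -- One power of `ρ_k ^ η` is the oscillation threshold, the other makes the cover sums converge.
  obtain ⟨η, hη, rfl⟩ : ∃ η > 0, d = s - α + 2 * η := ⟨(d - (s - α)) / 2, by linarith, by ring⟩
  refine measure_mono_null (fun x hx => ?_)
    (hausdorffMeasure_setOf_frequently_le_meanOscillation_eq_zero (q := q) (u := u)
      (fun k => (dyadicScale_pos hR k).ne') (tsum_dyadicScale_rpow_ne_top R hη) hc
      (ENNReal.mul_ne_top hM (ENNReal.rpow_ne_top_of_ne_zero two_ne_zero ENNReal.ofNat_ne_top)) hd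
      (fun k => (hbounds k).1) (fun k => (hbounds k).2.1) (fun k => (hbounds k).2.2))
  contrapose! hx
  exact not_not.2 <| isLebesguePoint_of_eventually_meanOscillation_lt hq hu hR hη <| by
    simpa [not_frequently] using hx

theorem statement2_general (s α q : ℝ) (hq : 0 < q) (hμ : IsLowerAhlfors μ s) (u : X → Y)
    (hu : AEMeasurable u μ) (M : ℝ≥0∞) (hM : M ≠ ∞)
    (hE : ∀ᶠ t in 𝓝[>] 0, besovEnergy μ q u t ≤ M * ENNReal.ofReal t ^ α) :
    dimH {x | ¬ IsLebesguePoint μ q u x} ≤ ENNReal.ofReal (s - α) := by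
  refine dimH_le fun d hd => ?_
  contrapose! hd
  rw [← ENNReal.ofReal_coe_nnreal, ENNReal.ofReal_lt_ofReal_iff'] at hd
  exact (hausdorffMeasure_setOf_not_isLebesguePoint_eq_zero μ hq hμ hu hM hE hd.2 hd.1).trans_ne
    ENNReal.zero_ne_top

end LebesguePoints

section Ahlfors

variable {X : Type*} [MetricSpace X] [MeasurableSpace X] [Nontrivial X] {μ : Measure X} {s : ℝ}

theorem IsAhlfors.exists_eventually_measure_closedBall_mem_Icc (hμ : IsAhlfors μ s) :
    ∃ c C : ℝ≥0, c ≠ 0 ∧ ∀ᶠ ε in 𝓝[>] (0 : ℝ), ∀ x,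
      μ (closedBall x ε) ∈ Icc (c * ENNReal.ofReal ε ^ s) (C * ENNReal.ofReal ε ^ s) := by
  obtain ⟨c, C, hc, hC, h⟩ := hμ
  have eventually_lt_ediam : ∀ᶠ ε in 𝓝[>] (0 : ℝ), ENNReal.ofReal ε < ediam (univ : Set X) :=
    ((ENNReal.continuous_ofReal.tendsto' 0 0 ENNReal.ofReal_zero).mono_left
      nhdsWithin_le_nhds).eventually_lt_const (ediam_pos_iff.2 nontrivial_univ)
  refine ⟨c.toNNReal, C.toNNReal, (Real.toNNReal_pos.2 hc).ne', ?_⟩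
  filter_upwards [eventually_lt_ediam, self_mem_nhdsWithin] with ε hε_lt hε x
  have ofReal_mul_rpow {a : ℝ} (ha : 0 < a) :
      ENNReal.ofReal (a * ε ^ s) = a.toNNReal * ENNReal.ofReal ε ^ s := by
    rw [ENNReal.ofReal_mul ha.le, ENNReal.ofReal_rpow_of_pos hε, ENNReal.ofReal]
  simpa only [mem_Icc, ofReal_mul_rpow hc, ofReal_mul_rpow hC] using h x ε hε hε_lt

theorem IsAhlfors.isLowerAhlfors (hμ : IsAhlfors μ s) : IsLowerAhlfors μ s := by
  obtain ⟨c, C, hc, h⟩ := hμ.exists_eventually_measure_closedBall_mem_Icc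
  exact ⟨c, hc, h.mono fun ε hε x => (hε x).1⟩

theorem IsAhlfors.isLocallyFiniteMeasure (hμ : IsAhlfors μ s) : IsLocallyFiniteMeasure μ := by
  obtain ⟨c, C, -, h⟩ := hμ.exists_eventually_measure_closedBall_mem_Icc
  obtain ⟨ε, h, hε⟩ := (h.and self_mem_nhdsWithin).exists
  refine ⟨fun x => ⟨closedBall x ε, closedBall_mem_nhds x hε, (h x).2.trans_lt ?_⟩⟩
  exact ENNReal.mul_lt_top ENNReal.coe_lt_top <| lt_top_iff_ne_top.2 <|
    ENNReal.rpow_ne_top_of_ne_zero (ENNReal.ofReal_pos.2 hε).ne' ENNReal.ofReal_ne_top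

theorem IsAhlfors.isUnifLocDoublingMeasure (hμ : IsAhlfors μ s) :
    IsUnifLocDoublingMeasure μ := by
  obtain ⟨c, C, hc, h⟩ := hμ.exists_eventually_measure_closedBall_mem_Icc
  have hc' : (c : ℝ≥0∞) ≠ 0 := ENNReal.coe_ne_zero.2 hc
  refine ⟨C * 2 ^ s * c⁻¹, ?_⟩
  filter_upwards [h, eventually_nhdsGT_zero_mul_left two_pos h] with ε hε h2ε x
  calc μ (closedBall x (2 * ε)) ≤ C * ENNReal.ofReal (2 * ε) ^ s := (h2ε x).2
    _ = C * 2 ^ s * (c : ℝ≥0∞)⁻¹ * (c * ENNReal.ofReal ε ^ s) := by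
        rw [ENNReal.ofReal_mul zero_le_two, ENNReal.ofReal_ofNat,
          ENNReal.mul_rpow_of_ne_top ENNReal.ofNat_ne_top ENNReal.ofReal_ne_top,
          mul_assoc _ _⁻¹, ENNReal.inv_mul_cancel_left hc' ENNReal.coe_ne_top, mul_assoc]
    _ ≤ C * 2 ^ s * (c : ℝ≥0∞)⁻¹ * μ (closedBall x ε) := by gcongr; exact (hε x).1
    _ = (C * 2 ^ s * c⁻¹ : ℝ≥0) * μ (closedBall x ε) := by
        rw [ENNReal.coe_mul, ENNReal.coe_mul, ENNReal.coe_inv hc,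
          ENNReal.coe_rpow_of_ne_zero two_ne_zero, ENNReal.coe_ofNat]

end Ahlfors

theorem MemBesov.exists_besovEnergy_le {X Y : Type*} [MetricSpace X] [MeasurableSpace X]
    [MetricSpace Y] [MeasurableSpace Y] [BorelSpace Y] {μ : Measure X} {r q : ℝ} {u : X → Y}
    (hu : MemBesov μ r q u) :
    ∃ M ≠ ∞, ∀ t > 0, besovEnergy μ q u t ≤ M * ENNReal.ofReal t ^ (r * q) := by
  refine ⟨_, hu.2.2.ne, fun t ht => ?_⟩
  have scale_ne_zero : ENNReal.ofReal t ^ (r * q) ≠ 0 :=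
    (ENNReal.rpow_pos (ENNReal.ofReal_pos.2 ht) ENNReal.ofReal_ne_top).ne'
  have scale_ne_top : ENNReal.ofReal t ^ (r * q) ≠ ∞ :=
    ENNReal.rpow_ne_top_of_ne_zero (ENNReal.ofReal_pos.2 ht).ne' ENNReal.ofReal_ne_top
  rw [← ENNReal.div_le_iff scale_ne_zero scale_ne_top, ENNReal.div_eq_inv_mul, besovEnergy,
    ← lintegral_const_mul' _ _ (ENNReal.inv_ne_top.2 scale_ne_zero)]
  simp only [setLAverage_eq, ENNReal.div_eq_inv_mul]
  exact le_iSup₂ (f := fun (t : ℝ) (_ : 0 < t) =>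
    ∫⁻ x, (ENNReal.ofReal t ^ (r * q))⁻¹ *
      ((μ (closedBall x t))⁻¹ * ∫⁻ z in closedBall x t, edist (u x) (u z) ^ q ∂μ) ∂μ) t ht

/-- Lebesgue points of Besov functions with complete target: outside a set `Θ` of
Hausdorff dimension at most `s - rq`, every point is a Lebesgue point of `u`. -/
theorem statement2 {X Y : Type*} [MetricSpace X] [MeasurableSpace X] [BorelSpace X]
    [MetricSpace Y] [MeasurableSpace Y] [BorelSpace Y] [CompleteSpace Y]
    (μ : Measure X) (s r q : ℝ) (hs : 0 < s)
    (hμ : IsAhlfors μ s) (hr0 : 0 ≤ r) (hr1 : r ≤ 1) (hq : 0 < q) (hrq : r * q ≤ s)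
    (u : X → Y) (hu : MemBesov μ r q u) :
    ∃ Θ : Set X, dimH Θ ≤ ENNReal.ofReal (s - r * q) ∧
      ∀ x ∉ Θ, ∃ ustar : Y,
        Tendsto (fun ε : ℝ =>
            (μ (closedBall x ε))⁻¹ * ∫⁻ z in closedBall x ε, edist (u z) ustar ^ q ∂μ)
          (𝓝[>] (0 : ℝ)) (𝓝 0) := by
  refine ⟨{x | ¬ IsLebesguePoint μ q u x}, ?_, fun x hx => ?_⟩
  · rcases subsingleton_or_nontrivial X with hX | hX
    · simp [(subsingleton_of_subsingleton (s := {x | ¬ IsLebesguePoint μ q u x})).dimH_zero]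
    have := hμ.isUnifLocDoublingMeasure
    have := hμ.isLocallyFiniteMeasure
    obtain ⟨M, hM, hE⟩ := hu.exists_besovEnergy_le
    exact statement2_general μ s (r * q) q hq hμ.isLowerAhlfors u hu.1.aemeasurable M hM
      (eventually_mem_nhdsWithin.mono hE)
  · simpa only [IsLebesguePoint, setLAverage_eq, ENNReal.div_eq_inv_mul] using not_not.1 hx
end

section
/- Let X be a metric space equipped with Carathéodory's construction from an admissible gauge ζ on the Borel sets, producing approximating measures φ_δ. Let Ω ⊂ X be an open set, μ a Borel measure on Ω, t ∈ (0,∞), and δ ∈ (0, min{I,γ}), where I and γ are the parameters in the admissibility conditions of ζ. Suppose A ⊂ { x ∈ Ω : sup_{0<ρ<δ, B_ρ(x)⊂Ω} μ(B_ρ(x))/ζ(B_ρ(x)) > t }. Then φ_{10δ}(A) ≤ (λ/t)·μ(Ω), where λ is the doubling constant of ζ. -/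
/-!
By Vitali's covering lemma, among the balls `B ⊆ Ω` with `t ζ(B) < μ(B)` there is a disjoint family
whose enlargements `τB` still cover `A`, for any `τ > 3`. When `μ(Ω)` is finite this family is
countable, because its members are disjoint subsets of `Ω` of positive measure. Hence the balls `τB`
form an admissible cover for `φ_{2τδ}(A)`, and doubling gives
`t ∑ ζ(τB) ≤ λ ∑ t ζ(B) ≤ λ ∑ μ(B) ≤ λ μ(Ω)`. The theorem is the case `τ = 5`.
-/

open MeasureTheory Metric Filter Set
open scoped ENNReal Topology

/-- The approximating measure `φ_δ` of Carathéodory's construction from the gauge `ζ`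
and the family of all Borel subsets: the infimum of `Σ_{S ∈ G} ζ(S)` over countable
Borel covers `G` of `A` by sets of diameter at most `δ`. -/
noncomputable def caraPre {X : Type*} [MetricSpace X] [MeasurableSpace X]
    (ζ : Set X → ℝ≥0∞) (δ : ℝ) (A : Set X) : ℝ≥0∞ :=
  ⨅ (G : Set (Set X)) (_ : G.Countable) (_ : ∀ S ∈ G, MeasurableSet S)
    (_ : ∀ S ∈ G, EMetric.diam S ≤ ENNReal.ofReal δ) (_ : A ⊆ ⋃₀ G),
    ∑' S : G, ζ S.1

theorem ediam_closedBall_le_ofReal {X : Type*} [PseudoMetricSpace X] (x : X) (r : ℝ) :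
    ediam (closedBall x r) ≤ ENNReal.ofReal (2 * r) :=
  ediam_le_of_forall_dist_le fun y hy z hz =>
    calc
      dist y z ≤ dist y x + dist z x := dist_triangle_right y z x
      _ ≤ r + r := add_le_add hy hz
      _ = 2 * r := (two_mul r).symm

theorem exists_pairwiseDisjoint_closedBall_cover {X : Type*} [PseudoMetricSpace X]
    {p : X → ℝ → Prop} {A : Set X} {δ τ : ℝ} (hτ : 3 < τ)
    (hA : ∀ x ∈ A, ∃ ρ ∈ Ioc 0 δ, p x ρ) :
    ∃ (s : Set X) (r : X → ℝ), (∀ x ∈ s, r x ∈ Ioc 0 δ ∧ p x (r x)) ∧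
      s.PairwiseDisjoint (fun x => closedBall x (r x)) ∧
      A ⊆ ⋃ x : s, closedBall x (τ * r x) := by
  choose! r hr hp using hA
  obtain ⟨s, hsA, hdisj, hcover⟩ :=
    Vitali.exists_disjoint_subfamily_covering_enlargement_closedBall A id r δ
      (fun x hx => (hr x hx).2) τ hτ
  refine ⟨s, r, fun x hx => ⟨hr x (hsA hx), hp x (hsA hx)⟩, hdisj, fun x hx => ?_⟩
  obtain ⟨y, hy, hxy⟩ := hcover x hx
  exact mem_iUnion.2 ⟨⟨y, hy⟩, hxy (mem_closedBall_self (hr x hx).1.le)⟩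

theorem countable_of_pairwise_disjoint_of_measure_pos {X ι : Type*} [MeasurableSpace X]
    {μ : Measure X} {U : ι → Set X} (hmeas : ∀ i, MeasurableSet (U i))
    (hdisj : Pairwise (Function.onFun Disjoint U)) (hpos : ∀ i, 0 < μ (U i))
    (hfin : μ (⋃ i, U i) ≠ ⊤) : Countable ι := by
  have hcount := Measure.countable_meas_pos_of_disjoint_of_meas_iUnion_ne_top μ hmeas hdisj hfin
  exact countable_univ_iff.1 (hcount.mono fun i _ => hpos i)

section CaraPre

variable {X : Type*} [MetricSpace X] [MeasurableSpace X] {ζ : Set X → ℝ≥0∞}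

theorem caraPre_le_tsum {ι : Type*} [Countable ι] {U : ι → Set X} {A : Set X} {δ : ℝ}
    (hmeas : ∀ i, MeasurableSet (U i)) (hdiam : ∀ i, ediam (U i) ≤ ENNReal.ofReal δ)
    (hA : A ⊆ ⋃ i, U i) : caraPre ζ δ A ≤ ∑' i, ζ (U i) :=
  calc
    caraPre ζ δ A ≤ ∑' S : range U, ζ S :=
      iInf₂_le_of_le (range U) (countable_range U) <|
        iInf₂_le_of_le (forall_mem_range.2 hmeas) (forall_mem_range.2 hdiam) <|
          iInf_le _ (by rwa [sUnion_range])
    _ = ∑' S : range U, ζ (U (rangeSplitting U S)) := by simp only [apply_rangeSplitting]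
    _ ≤ ∑' i, ζ (U i) :=
      ENNReal.tsum_comp_le_tsum_of_injective (rangeSplitting_injective U) fun i => ζ (U i)

variable [OpensMeasurableSpace X]

theorem caraPre_le_tsum_closedBall {ι : Type*} [Countable ι] {c : ι → X} {r : ι → ℝ} {A : Set X}
    {δ : ℝ} (hr : ∀ i, r i ≤ δ) (hA : A ⊆ ⋃ i, closedBall (c i) (r i)) :
    caraPre ζ (2 * δ) A ≤ ∑' i, ζ (closedBall (c i) (r i)) :=
  caraPre_le_tsum (fun _ => measurableSet_closedBall)
    (fun i => (ediam_closedBall_le_ofReal _ _).trans (by gcongr; exact hr i)) hA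

theorem statement3_general {lam t : ℝ≥0∞} {δ τ : ℝ} {μ : Measure X} {Ω A : Set X}
    (hlam : lam ≠ 0) (hτ : 3 < τ)
    (hζ : ∀ (x : X), ∀ R ∈ Ioc 0 δ, ζ (closedBall x (τ * R)) ≤ lam * ζ (closedBall x R))
    (hA : ∀ x ∈ A, ∃ ρ ∈ Ioc 0 δ, closedBall x ρ ⊆ Ω ∧
      t * ζ (closedBall x ρ) < μ (closedBall x ρ)) :
    t * caraPre ζ (2 * (τ * δ)) A ≤ lam * μ Ω := by
  rcases eq_or_ne (μ Ω) ⊤ with hΩ | hΩ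
  · simp [hΩ, ENNReal.mul_top hlam]
  obtain ⟨s, r, hs, hdisj, hcover⟩ := exists_pairwiseDisjoint_closedBall_cover hτ hA
  have hr (x : s) : r x ∈ Ioc 0 δ := (hs x x.2).1
  have hdensity (x : s) : t * ζ (closedBall x (r x)) < μ (closedBall x (r x)) := (hs x x.2).2.2
  have hmeas (x : s) : MeasurableSet (closedBall (x : X) (r x)) := measurableSet_closedBall
  have hdisj_sub := (pairwise_subtype_iff_pairwise_set s _).2 hdisj
  have hunion : μ (⋃ x : s, closedBall x (r x)) ≤ μ Ω :=
    measure_mono (iUnion_subset fun x => (hs x x.2).2.1)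
  have : Countable s := countable_of_pairwise_disjoint_of_measure_pos hmeas hdisj_sub
    (fun x => pos_of_gt (hdensity x)) (ne_top_of_le_ne_top hΩ hunion)
  calc
    t * caraPre ζ (2 * (τ * δ)) A ≤ t * ∑' x : s, ζ (closedBall x (τ * r x)) := by
      gcongr
      exact caraPre_le_tsum_closedBall (fun x => by gcongr; exact (hr x).2) hcover
    _ ≤ t * ∑' x : s, lam * ζ (closedBall x (r x)) := by
      gcongr with x
      exact hζ x (r x) (hr x)
    _ = lam * ∑' x : s, t * ζ (closedBall x (r x)) := by
      simp only [ENNReal.tsum_mul_left, mul_left_comm]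
    _ ≤ lam * ∑' x : s, μ (closedBall x (r x)) := by
      gcongr with x
      exact (hdensity x).le
    _ ≤ lam * μ Ω := by
      gcongr
      exact (tsum_meas_le_meas_iUnion_of_disjoint μ hmeas hdisj_sub).trans hunion

end CaraPre

/-- A density-type estimate for the approximating measure `φ_{10δ}`: if at every point
of `A ⊆ Ω` some ball of radius `< δ` contained in `Ω` satisfies `μ(B)/ζ(B) > t`, then
`φ_{10δ}(A) ≤ (λ/t) μ(Ω)`. -/
theorem statement3 {X : Type*} [MetricSpace X] [MeasurableSpace X] [BorelSpace X]
    (ζ : Set X → ℝ≥0∞) (I γ lam : ℝ≥0∞) (hI : 0 < I) (hγ : 0 < γ)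
    (hlam : 0 < lam) (hlamtop : lam ≠ ⊤)
    (hζfin : ∀ (x : X) (R : ℝ), 0 < R → ENNReal.ofReal R < I →
      0 < ζ (closedBall x R) ∧ ζ (closedBall x R) < ⊤)
    (hζdbl : ∀ (x : X) (R : ℝ), 0 < R → ENNReal.ofReal R < γ →
      ζ (closedBall x (5 * R)) ≤ lam * ζ (closedBall x R))
    (Ω : Set X) (hΩ : IsOpen Ω) (μ : Measure X)
    (t : ℝ≥0∞) (ht : 0 < t) (httop : t ≠ ⊤)
    (δ : ℝ) (hδ : 0 < δ) (hδI : ENNReal.ofReal δ < min I γ)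
    (A : Set X)
    (hA : A ⊆ {x ∈ Ω | ∃ ρ : ℝ, 0 < ρ ∧ ρ < δ ∧ closedBall x ρ ⊆ Ω ∧
      t < μ (closedBall x ρ) / ζ (closedBall x ρ)}) :
    caraPre ζ (10 * δ) A ≤ (lam / t) * μ Ω := by
  have hmul := statement3_general (τ := 5) hlam.ne' (by norm_num)
    (fun x R hR => hζdbl x R hR.1 <| (ENNReal.ofReal_le_ofReal hR.2).trans_lt <|
      hδI.trans_le (min_le_right I γ))
    (fun x hx => let ⟨_, ρ, hρ, hρδ, hρΩ, hρt⟩ := hA hx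
      ⟨ρ, ⟨hρ, hρδ.le⟩, hρΩ, ENNReal.mul_lt_of_lt_div hρt⟩)
  rwa [mul_comm t, ← ENNReal.le_div_iff_mul_le (.inl ht.ne') (.inl httop),
    ENNReal.mul_div_right_comm, show 2 * (5 * δ) = 10 * δ by ring] at hmul
end

section
/- Let X be a metric space, let Σ denote the family of all closed balls in X, and let F : Σ → [0,∞) be a set function such that: (a) if A, B ∈ Σ and A ⊂ B then F(A) ≤ F(B); and (b) for every x ∈ X and r₀ ∈ (0,∞), lim_{r↓r₀} F(B_r(x)) = F(B_{r₀}(x)). Fix r₀ ∈ (0,∞) and define h(x) := F(B_{r₀}(x)). Then h is upper semicontinuous on X, and in particular Borel measurable. -/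
open MeasureTheory Metric Filter Set
open scoped ENNReal Topology

/-! For `r > r₀` and `y` within `r - r₀` of `x`, the ball `B_{r₀}(y)` lies in `B_r(x)`, so
`limsup_{y → x} F(B_{r₀}(y)) ≤ F(B_r(x))`; let `r ↓ r₀`. -/

theorem eventually_nhds_closedBall_subset_closedBall {X : Type*} [PseudoMetricSpace X] (x : X)
    {r₀ r : ℝ} (hr : r₀ < r) : ∀ᶠ y in 𝓝 x, closedBall y r₀ ⊆ closedBall x r := by
  filter_upwards [ball_mem_nhds x (sub_pos.2 hr)] with y hy
  exact closedBall_subset_closedBall' (lt_sub_iff_add_lt'.1 hy).le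

theorem upperSemicontinuousAt_comp_closedBall {X β : Type*} [PseudoMetricSpace X] [LinearOrder β]
    [TopologicalSpace β] [ClosedIciTopology β] (F : Set X → β) {x : X} {r₀ : ℝ}
    (hmono : ∀ y r, r₀ < r → closedBall y r₀ ⊆ closedBall x r →
      F (closedBall y r₀) ≤ F (closedBall x r))
    (hcont : Tendsto (fun r => F (closedBall x r)) (𝓝[>] r₀) (𝓝 (F (closedBall x r₀)))) :
    UpperSemicontinuousAt (fun y => F (closedBall y r₀)) x := by
  intro b hb
  obtain ⟨r, hFr, hr : r₀ < r⟩ :=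
    ((hcont.eventually_lt_const hb).and self_mem_nhdsWithin).exists
  filter_upwards [eventually_nhds_closedBall_subset_closedBall x hr] with y hy
  exact (hmono y r hr hy).trans_lt hFr

theorem statement7_general {X β : Type*} [PseudoMetricSpace X] [MeasurableSpace X]
    [OpensMeasurableSpace X] [LinearOrder β] [TopologicalSpace β] [OrderTopology β]
    [SecondCountableTopology β] [MeasurableSpace β] [BorelSpace β]
    (F : Set X → β) (r₀ : ℝ)
    (hmono : ∀ y x r, r₀ < r → closedBall y r₀ ⊆ closedBall x r →
      F (closedBall y r₀) ≤ F (closedBall x r))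
    (hcont : ∀ x, Tendsto (fun r => F (closedBall x r)) (𝓝[>] r₀) (𝓝 (F (closedBall x r₀)))) :
    UpperSemicontinuous (fun x => F (closedBall x r₀)) ∧
      Measurable (fun x => F (closedBall x r₀)) := by
  have husc : UpperSemicontinuous (fun x => F (closedBall x r₀)) := fun x =>
    upperSemicontinuousAt_comp_closedBall F (fun y => hmono y x) (hcont x)
  exact ⟨husc, husc.measurable⟩

/-- If `F` is a nonnegative, monotone set function on closed balls which is
right-continuous in the radius, then `x ↦ F(B_{r₀}(x))` is upper semicontinuous,
and in particular Borel measurable. -/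
theorem statement7 {X : Type*} [MetricSpace X] [MeasurableSpace X] [BorelSpace X]
    (F : Set X → ℝ)
    (hF0 : ∀ (x : X) (r : ℝ), 0 < r → 0 ≤ F (closedBall x r))
    (hmono : ∀ (x₁ x₂ : X) (r₁ r₂ : ℝ), 0 < r₁ → 0 < r₂ →
      closedBall x₁ r₁ ⊆ closedBall x₂ r₂ →
      F (closedBall x₁ r₁) ≤ F (closedBall x₂ r₂))
    (hcont : ∀ (x : X) (r₀ : ℝ), 0 < r₀ →
      Tendsto (fun r : ℝ => F (closedBall x r)) (𝓝[>] r₀) (𝓝 (F (closedBall x r₀))))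
    (r₀ : ℝ) (hr₀ : 0 < r₀) :
    UpperSemicontinuous (fun x : X => F (closedBall x r₀)) ∧
      Measurable (fun x : X => F (closedBall x r₀)) := by
  exact statement7_general F r₀
    (fun y x r hr => hmono y x r₀ r hr₀ (hr₀.trans hr)) (fun x => hcont x r₀ hr₀)
end

section
/- Let X be a metric space and μ a Borel measure on X such that 0 < μ(B) < ∞ for every closed ball B ⊂ X. Let W : X×X → [0,∞) be locally integrable with respect to μ×μ. Fix σ ∈ (0,∞) and define G(x) := ⨍_{B_σ(x)} ⨍_{B_σ(x)} W(z,y) dμ(z) dμ(y). Then G is Borel measurable on X. -/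
open MeasureTheory Metric Filter Set
open scoped ENNReal Topology

/-! A measure that is positive and finite on balls is σ-finite, and it forces the space to be second
countable: the balls of radius `ε / 2` around the points of an `ε`-separated set are disjoint and of
positive measure, so there are only countably many of them. Hence `{(x, y) | dist y x ≤ σ}` is
measurable for the product σ-algebra, and the measurability part of Tonelli's theorem, applied to
each of the two averages in turn, shows that `G` is measurable. -/

section SecondCountable

theorem exists_isCover_isSeparated {X : Type*} [PseudoEMetricSpace X] (ε : NNReal) (s : Set X) :
    ∃ N ⊆ s, IsCover ε s N ∧ IsSeparated ε N := by
  obtain ⟨N, hN⟩ := zorn_subset {N | N ⊆ s ∧ IsSeparated ε N} fun c hc hchain =>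
    ⟨⋃₀ c, ⟨sUnion_subset fun N hN => (hc hN).1,
      hchain.pairwise_sUnion.2 fun N hN => (hc hN).2⟩, fun _ => subset_sUnion_of_mem⟩
  exact ⟨N, hN.prop.1, .of_maximal_isSeparated hN, hN.prop.2⟩

variable {X : Type*} [PseudoEMetricSpace X] [MeasurableSpace X] [OpensMeasurableSpace X]

theorem countable_of_isSeparated (μ : Measure X) [SFinite μ] [μ.IsOpenPosMeasure] {ε : ℝ≥0∞}
    (hε : ε ≠ 0) {N : Set X} (hN : IsSeparated ε N) : N.Countable := by
  have hdisj : Pairwise (Function.onFun Disjoint fun x : N => eball (x : X) (ε / 2)) :=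
    fun x y hxy => eball_disjoint <| by
      simpa only [ENNReal.add_halves] using (hN x.2 y.2 (Subtype.coe_ne_coe.2 hxy)).le
  have hpos (x : N) : 0 < μ (eball (x : X) (ε / 2)) :=
    measure_eball_pos μ _ (ENNReal.half_pos hε).ne'
  have hcount := Measure.countable_meas_pos_of_disjoint_iUnion (μ := μ)
    (fun _ => isOpen_eball.measurableSet) hdisj
  simpa only [hpos, ofPred_true, countable_univ_iff, countable_coe_iff] using hcount

theorem secondCountableTopology_of_isOpenPosMeasure (μ : Measure X) [SFinite μ]
    [μ.IsOpenPosMeasure] : SecondCountableTopology X := by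
  refine EMetric.secondCountable_of_almost_dense_set fun ε hε => ?_
  obtain ⟨δ, hδ, hδε⟩ := ENNReal.lt_iff_exists_nnreal_btwn.1 hε
  obtain ⟨N, -, hcover, hsep⟩ := exists_isCover_isSeparated δ (univ : Set X)
  refine ⟨N, countable_of_isSeparated μ hδ.ne' hsep, univ_subset_iff.1 ?_⟩
  exact (isCover_iff_subset_iUnion_closedEBall.1 hcover).trans
    (iUnion₂_mono fun _ _ => closedEBall_subset_closedEBall hδε.le)

end SecondCountable

section Balls

variable {X : Type*} [PseudoMetricSpace X] [MeasurableSpace X] {μ : Measure X}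

theorem sigmaFinite_of_measure_closedBall_lt_top (x : X)
    (h : ∀ r, 0 < r → μ (closedBall x r) < ∞) : SigmaFinite μ := by
  refine ⟨⟨fun n : ℕ => closedBall x (n + 1), fun _ => trivial,
    fun n => h _ n.cast_add_one_pos, univ_subset_iff.1 ?_⟩⟩
  rw [← iUnion_closedBall_nat x]
  exact iUnion_mono fun n => closedBall_subset_closedBall (lt_add_one _).le

theorem isOpenPosMeasure_of_measure_closedBall_pos
    (h : ∀ x r, 0 < r → 0 < μ (closedBall x r)) : μ.IsOpenPosMeasure where
  open_pos U hU hne := by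
    obtain ⟨x, hx⟩ := hne
    obtain ⟨r, hr, hsub⟩ := nhds_basis_closedBall.mem_iff.1 (hU.mem_nhds hx)
    exact ((h x r hr).trans_le (measure_mono hsub)).ne'

end Balls

section Average

variable {α β : Type*} [MeasurableSpace α] [MeasurableSpace β]

theorem setLAverage_setLAverage {μ : Measure α} {ν : Measure β} (s : Set α) {t : Set β}
    (ht : ν t ≠ 0) (f : α → β → ℝ≥0∞) :
    ⨍⁻ x in s, ⨍⁻ y in t, f x y ∂ν ∂μ = (μ s)⁻¹ * (ν t)⁻¹ * ∫⁻ x in s, ∫⁻ y in t, f x y ∂ν ∂μ := by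
  simp only [setLAverage_eq, ENNReal.div_eq_inv_mul]
  rw [lintegral_const_mul' _ _ (ENNReal.inv_ne_top.2 ht), mul_assoc]

theorem measurable_setLIntegral_prodMk_preimage {ν : Measure β} [SFinite ν] {s : Set (α × β)}
    (hs : MeasurableSet s) {f : α × β → ℝ≥0∞} (hf : Measurable f) :
    Measurable fun x => ∫⁻ y in Prod.mk x ⁻¹' s, f (x, y) ∂ν := by
  simp only [← lintegral_indicator (measurable_prodMk_left hs)]
  exact (hf.indicator hs).lintegral_prod_right'

theorem measurable_setLAverage_prodMk_preimage {ν : Measure β} [SFinite ν] {s : Set (α × β)}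
    (hs : MeasurableSet s) {f : α × β → ℝ≥0∞} (hf : Measurable f) :
    Measurable fun x => ⨍⁻ y in Prod.mk x ⁻¹' s, f (x, y) ∂ν := by
  simp only [setLAverage_eq]
  exact (measurable_setLIntegral_prodMk_preimage hs hf).div (measurable_measure_prodMk_left hs)

variable {X : Type*} [PseudoMetricSpace X] [SecondCountableTopology X] [MeasurableSpace X]
  [OpensMeasurableSpace X] {μ : Measure X} [SFinite μ]

theorem measurable_setLAverage_closedBall {c : α → X} (hc : Measurable c) {r : α → ℝ}
    (hr : Measurable r) {f : α × X → ℝ≥0∞} (hf : Measurable f) :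
    Measurable fun a => ⨍⁻ y in closedBall (c a) (r a), f (a, y) ∂μ :=
  measurable_setLAverage_prodMk_preimage (s := {p | dist p.2 (c p.1) ≤ r p.1})
    (measurableSet_le (measurable_snd.dist (hc.comp measurable_fst)) (hr.comp measurable_fst)) hf

theorem measurable_setLAverage_setLAverage_closedBall {f : X × X → ℝ≥0∞} (hf : Measurable f)
    (r : ℝ) :
    Measurable fun x => ⨍⁻ z in closedBall x r, ⨍⁻ y in closedBall x r, f (z, y) ∂μ ∂μ := by
  have hinner : Measurable fun p : X × X => ⨍⁻ y in closedBall p.1 r, f (p.2, y) ∂μ :=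
    measurable_setLAverage_closedBall measurable_fst measurable_const
      (hf.comp ((measurable_snd.comp measurable_fst).prodMk measurable_snd))
  exact measurable_setLAverage_closedBall measurable_id measurable_const hinner

end Average

theorem statement8_general {X : Type*} [PseudoMetricSpace X] [MeasurableSpace X]
    [OpensMeasurableSpace X] (μ : Measure X)
    (hball : ∀ (x : X) (r : ℝ), 0 < r →
      0 < μ (closedBall x r) ∧ μ (closedBall x r) < ⊤)
    (W : X → X → ℝ≥0∞) (hWmeas : Measurable (fun p : X × X => W p.1 p.2))
    (σ : ℝ) (hσ : 0 < σ) :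
    Measurable (fun x : X =>
      (μ (closedBall x σ))⁻¹ * (μ (closedBall x σ))⁻¹ *
        ∫⁻ z in closedBall x σ, ∫⁻ y in closedBall x σ, W z y ∂μ ∂μ) := by
  cases isEmpty_or_nonempty X with
  | inl _ => exact measurable_of_empty _
  | inr hne =>
    obtain ⟨x₀⟩ := hne
    have : SigmaFinite μ :=
      sigmaFinite_of_measure_closedBall_lt_top x₀ fun r hr => (hball x₀ r hr).2
    have : μ.IsOpenPosMeasure :=
      isOpenPosMeasure_of_measure_closedBall_pos fun x r hr => (hball x r hr).1
    have : SecondCountableTopology X := secondCountableTopology_of_isOpenPosMeasure μ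
    simp only [← setLAverage_setLAverage _ (hball _ σ hσ).1.ne']
    exact measurable_setLAverage_setLAverage_closedBall hWmeas σ

/-- If `μ` is a Borel measure giving every closed ball positive finite measure and
`W ≥ 0` is locally integrable on `X × X`, then the double ball average
`G(x) = ⨍_{B_σ(x)} ⨍_{B_σ(x)} W(z,y) dμ(z) dμ(y)` is Borel measurable. -/
theorem statement8 {X : Type*} [MetricSpace X] [MeasurableSpace X] [BorelSpace X]
    (μ : Measure X)
    (hball : ∀ (x : X) (r : ℝ), 0 < r →
      0 < μ (closedBall x r) ∧ μ (closedBall x r) < ⊤)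
    (W : X → X → ℝ≥0∞) (hWmeas : Measurable (fun p : X × X => W p.1 p.2))
    (hWloc : ∀ (x : X) (r : ℝ), 0 < r →
      ∫⁻ z in closedBall x r, ∫⁻ y in closedBall x r, W z y ∂μ ∂μ < ⊤)
    (σ : ℝ) (hσ : 0 < σ) :
    Measurable (fun x : X =>
      (μ (closedBall x σ))⁻¹ * (μ (closedBall x σ))⁻¹ *
        ∫⁻ z in closedBall x σ, ∫⁻ y in closedBall x σ, W z y ∂μ ∂μ) :=
  statement8_general μ hball W hWmeas σ hσ
end
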